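/- arXiv:2312.10433 — 3 statements merged into one kernel-verified Lean document; each statement's English description precedes it below -/
import Mathlib

section
/- For every integer d ≥ 3, the ideal I = I_3(H) of ℂ[m_0,…,m_d] generated by the 3×3 minors of the matrix H is a prime ideal. -/
open MvPolynomial

/-- The `3 × d` matrix `H` of the inverse Gaussian moment variety: its first column is
`(m₀², 0, m₁²)ᵀ`, and its `c`-th column, for `2 ≤ c ≤ d`, is
`(m_{c-2}, (2c-3)·m_{c-1}, m_c)ᵀ`.  Columns are indexed by `Fin d`, with `c : Fin d`
corresponding to the paper's column `c + 1`. -/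
noncomputable def invGaussMatrix (d : ℕ) :
    Matrix (Fin 3) (Fin d) (MvPolynomial (Fin (d + 1)) ℂ) :=
  Matrix.of fun r c =>
    if c.val = 0 then
      ![X ⟨0, by omega⟩ ^ 2, 0, X ⟨1, by have := c.isLt; omega⟩ ^ 2] r
    else
      ![X ⟨c.val - 1, by have := c.isLt; omega⟩,
        C (2 * (c.val : ℂ) - 1) * X ⟨c.val, by have := c.isLt; omega⟩,
        X ⟨c.val + 1, by have := c.isLt; omega⟩] r

/-- The ideal `I₃(H)` generated by all `3 × 3` minors of `H`, i.e. determinants of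
submatrices obtained by choosing `3` of the `d` columns. -/
noncomputable def invGaussIdeal (d : ℕ) : Ideal (MvPolynomial (Fin (d + 1)) ℂ) :=
  Ideal.span
    { p | ∃ s : Fin 3 → Fin d, StrictMono s ∧ p = ((invGaussMatrix d).submatrix id s).det }

/-!
Let `R = ℂ[m_0, m_{d-1}, m_d]`. The `3 × 3` minors rewrite every monomial modulo `I₃(H)` in terms
of monomials whose indices have a larger sum of squares, so `S / I₃(H)` is generated as an
`R`-module by the `(d - 1)²` monomials in the other coordinates that cannot be rewritten.

Let `J ⊇ I₃(H)` be the kernel of the parametrisation `m_j = a s^j q_j(t)` by Bessel polynomials. For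
generic values of `m_0`, `m_{d-1}`, `m_d` the points of the parametrised variety correspond to the
roots of `q_d^{d-1} - c q_{d-1}^d`; these are `(d - 1)²` distinct ones unless `c` is one of the
finitely many values of `q_d^{d-1} / q_{d-1}^d` at zeros of the Wronskian. By Dedekind's
independence of characters, functions on the fibre that span all restrictions of polynomials, and
are as many as there are points, are linearly independent. So an `R`-combination of the generating
monomials that lies in `J` has generically vanishing coefficients. Hence `I₃(H) = J`, the kernel of
a homomorphism into a domain.
-/

section GenericFiber

theorem linearIndependent_apply_of_forall_mem_span {ι M K : Type*} [Finite ι] [Monoid M]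
    [Field K] {χ : ι → M →* K} (hχ : Function.Injective χ) {b : ι → M}
    (hb : ∀ x, (fun i => χ i x) ∈ Submodule.span K (Set.range fun p i => χ i (b p))) :
    LinearIndependent K fun p i => χ i (b p) := by
  cases nonempty_fintype ι
  have hspan : Submodule.span K (Set.range (flip fun i => ⇑(χ i))) = ⊤ :=
    span_flip_eq_top_iff_linearIndependent.mpr ((linearIndependent_monoidHom M K).comp χ hχ)
  refine linearIndependent_of_top_le_span_of_card_eq_finrank ?_
    (Module.finrank_fintype_fun_eq_card K).symm
  rw [← hspan, Submodule.span_le]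
  rintro _ ⟨x, rfl⟩
  exact hb x

theorem exists_sub_sum_smul_mem_of_span_sup_eq_top {ι R A : Type*} [Fintype ι] [CommRing R]
    [CommRing A] [Algebra R A] {I : Ideal A} {b : ι → A}
    (hb : Submodule.span R (Set.range b) ⊔ I.restrictScalars R = ⊤) (x : A) :
    ∃ c : ι → R, x - ∑ p, c p • b p ∈ I := by
  obtain ⟨y, hy, w, hw, rfl⟩ := Submodule.mem_sup.mp (hb ▸ Submodule.mem_top (x := x))
  obtain ⟨c, rfl⟩ := (Submodule.mem_span_range_iff_exists_fun _).mp hy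
  exact ⟨c, by simpa using hw⟩

theorem eval_eq_eval_of_mem_supported {σ R : Type*} [CommSemiring R] {s : Set σ}
    {F : MvPolynomial σ R} (hF : F ∈ supported R s) {v w : σ → R} (h : s.EqOn v w) :
    eval v F = eval w F :=
  eval₂Hom_congr' rfl (fun _ hi _ => h (mem_supported.mp hF hi)) rfl

theorem eval_injective {σ R : Type*} [CommSemiring R] :
    Function.Injective fun v : σ → R => (eval v : MvPolynomial σ R →* R) := fun v w h => by
  ext j
  simpa using DFunLike.congr_fun h (X j)

variable {σ ι K : Type*} [Field K] {I J : Ideal (MvPolynomial σ K)} {s : Set σ}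
  {b : ι → MvPolynomial σ K}

theorem sum_eval_mul_eval_of_sub_sum_mem [Fintype ι] {c : ι → supported K s}
    {F : MvPolynomial σ K} (hF : F - ∑ p, c p • b p ∈ J) {v z : σ → K}
    (hz : z ∈ zeroLocus K J) (hzv : s.EqOn z v) :
    ∑ p, eval v (c p) * eval z (b p) = eval z F := by
  have h := hz _ hF
  rw [aeval_eq_eval, map_sub, map_sum, sub_eq_zero] at h
  rw [h]
  refine Finset.sum_congr rfl fun p _ => ?_
  rw [Subalgebra.smul_def, smul_eq_mul, map_mul, eval_eq_eval_of_mem_supported (c p).2 hzv]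

theorem linearIndependent_eval_of_mem_zeroLocus [Finite ι]
    (hb : Submodule.span (supported K s) (Set.range b) ⊔ J.restrictScalars (supported K s) = ⊤)
    {v : σ → K} {z : ι ↪ (σ → K)} (hz : ∀ i, z i ∈ zeroLocus K J) (hzv : ∀ i, s.EqOn (z i) v) :
    LinearIndependent K fun p i => eval (z i) (b p) := by
  cases nonempty_fintype ι
  refine linearIndependent_apply_of_forall_mem_span (eval_injective.comp z.injective) fun F => ?_
  obtain ⟨c, hc⟩ := exists_sub_sum_smul_mem_of_span_sup_eq_top hb F
  refine (Submodule.mem_span_range_iff_exists_fun K).mpr ⟨fun p => eval v (c p), ?_⟩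
  ext i
  simpa using sum_eval_mul_eval_of_sub_sum_mem hc (hz i) (hzv i)

theorem eq_of_span_supported_of_generic_fiber [Finite ι] [Infinite K] (hIJ : I ≤ J)
    (hb : Submodule.span (supported K s) (Set.range b) ⊔ I.restrictScalars (supported K s) = ⊤)
    {D : MvPolynomial σ K} (hD : D ≠ 0)
    (hfib : ∀ v, eval v D ≠ 0 → ∃ z : ι ↪ (σ → K), ∀ i, z i ∈ zeroLocus K J ∧ s.EqOn (z i) v) :
    I = J := by
  cases nonempty_fintype ι
  refine le_antisymm hIJ fun F hF => ?_
  obtain ⟨c, hc⟩ := exists_sub_sum_smul_mem_of_span_sup_eq_top hb F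
  suffices h : ∀ p, c p = 0 by simpa [h] using hc
  intro p
  refine Subtype.ext ((mul_eq_zero.mp (MvPolynomial.funext fun v => ?_)).resolve_right hD)
  rw [map_mul, map_zero, mul_eq_zero]
  refine or_iff_not_imp_right.mpr fun hv => ?_
  obtain ⟨z, hz⟩ := hfib v hv
  have hbJ : Submodule.span (supported K s) (Set.range b) ⊔ J.restrictScalars (supported K s) = ⊤ :=
    top_le_iff.mp (hb.ge.trans (sup_le_sup_left (fun _ hG => hIJ hG) _))
  have hind := linearIndependent_eval_of_mem_zeroLocus hbJ (fun i => (hz i).1) fun i => (hz i).2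
  refine Fintype.linearIndependent_iff.mp hind (fun p => eval v (c p)) ?_ p
  ext i
  simpa using (sum_eval_mul_eval_of_sub_sum_mem (hIJ hc) (hz i).1 (hz i).2).trans ((hz i).1 F hF)

end GenericFiber

theorem eval_ne_zero_or_eval_ne_zero_of_isCoprime {R : Type*} [CommSemiring R] [Nontrivial R]
    {P Q : Polynomial R} (hPQ : IsCoprime P Q) (t : R) : P.eval t ≠ 0 ∨ Q.eval t ≠ 0 := by
  simpa only [Polynomial.coe_aeval_eq_eval] using Polynomial.aeval_ne_zero_of_isCoprime hPQ t

theorem eval_ne_zero_of_isRoot_pow_sub_C_mul_pow {R : Type*} [CommRing R] [IsDomain R]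
    {P Q : Polynomial R} (hPQ : IsCoprime P Q) {m n : ℕ} (hm : m ≠ 0) (hn : n ≠ 0) {c t : R}
    (hc : c ≠ 0) (h : (P ^ m - Polynomial.C c * Q ^ n).IsRoot t) :
    P.eval t ≠ 0 ∧ Q.eval t ≠ 0 := by
  have hpow : P.eval t ^ m = c * Q.eval t ^ n := by simpa [sub_eq_zero] using h
  have hiff : P.eval t = 0 ↔ Q.eval t = 0 := by
    rw [← pow_eq_zero_iff hm, hpow, mul_eq_zero, pow_eq_zero_iff hn, or_iff_right hc]
  have hor := eval_ne_zero_or_eval_ne_zero_of_isCoprime hPQ t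
  tauto

theorem eval_ne_zero_and_isRoot_wronskian_of_isRoot_derivative {K : Type*} [Field K]
    {P Q : Polynomial K} (hPQ : IsCoprime P Q) {c t : K}
    (hroot : (P - Polynomial.C c * Q).IsRoot t)
    (hroot' : (P - Polynomial.C c * Q).derivative.IsRoot t) :
    Q.eval t ≠ 0 ∧ (P.wronskian Q).IsRoot t := by
  simp only [Polynomial.IsRoot, Polynomial.wronskian, Polynomial.eval_sub, Polynomial.eval_mul,
    Polynomial.eval_C, Polynomial.derivative_sub, Polynomial.derivative_C_mul] at hroot hroot' ⊢
  refine ⟨fun hQt => ?_, ?_⟩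
  · have hPt : P.eval t = 0 := by simpa [hQt] using hroot
    exact (eval_ne_zero_or_eval_ne_zero_of_isCoprime hPQ t).elim (· hPt) (· hQt)
  · linear_combination Q.derivative.eval t * hroot - Q.eval t * hroot'

theorem exists_finset_forall_card_roots_sub_C_mul {K : Type*} [Field K] [IsAlgClosed K]
    [CharZero K] [DecidableEq K] {P Q : Polynomial K} (hPQ : IsCoprime P Q)
    (hdeg : Q.natDegree < P.natDegree) :
    ∃ bad : Finset K, ∀ c ∉ bad,
      (P - Polynomial.C c * Q).roots.toFinset.card = P.natDegree := by
  have hW : P.wronskian Q ≠ 0 := fun h => by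
    rw [Polynomial.derivative_eq_zero.mp (hPQ.wronskian_eq_zero_iff.mp h).1] at hdeg
    exact Nat.not_lt_zero _ hdeg
  refine ⟨(P.wronskian Q).roots.toFinset.image fun t => P.eval t / Q.eval t, fun c hc => ?_⟩
  have hdegF : (P - Polynomial.C c * Q).natDegree = P.natDegree :=
    Polynomial.natDegree_sub_eq_left_of_natDegree_lt
      ((Polynomial.natDegree_C_mul_le c Q).trans_lt hdeg)
  have hF : P - Polynomial.C c * Q ≠ 0 := fun h => by
    rw [h, Polynomial.natDegree_zero] at hdegF
    omega
  have hnodup : (P - Polynomial.C c * Q).roots.Nodup := by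
    rw [Multiset.nodup_iff_count_le_one]
    intro t
    rw [Polynomial.count_roots]
    by_contra! hlt
    obtain ⟨hroot, hroot'⟩ := (Polynomial.one_lt_rootMultiplicity_iff_isRoot hF).mp hlt
    obtain ⟨hQt, hWt⟩ := eval_ne_zero_and_isRoot_wronskian_of_isRoot_derivative hPQ hroot hroot'
    refine hc (Finset.mem_image.mpr ⟨t, ?_, ?_⟩)
    · exact Multiset.mem_toFinset.mpr ((Polynomial.mem_roots hW).mpr hWt)
    · rw [div_eq_iff hQt]
      simpa [sub_eq_zero] using hroot
  rw [Multiset.toFinset_card_of_nodup hnodup, ← hdegF]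
  exact (IsAlgClosed.splits _).natDegree_eq_card_roots.symm

theorem exists_le_card_eq {α : Type*} {n : ℕ} {s : Multiset α} (h : n ≤ s.card) :
    ∃ t ≤ s, t.card = n := by
  have hpos : 0 < (Multiset.powersetCard n s).card := by
    simpa only [Multiset.card_powersetCard] using Nat.choose_pos h
  obtain ⟨t, ht⟩ := Multiset.card_pos_iff_exists_mem.mp hpos
  exact ⟨t, Multiset.mem_powersetCard.mp ht⟩

theorem exists_mul_pow_mul_eq {K : Type*} [Field K] {k : ℕ} {a α β p q : K}
    (ha : a ≠ 0) (hα : α ≠ 0) (hβ : β ≠ 0) (hp : p ≠ 0) (hq : q ≠ 0)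
    (h : p ^ k = a * β ^ k / α ^ (k + 1) * q ^ (k + 1)) :
    ∃ s, s ≠ 0 ∧ a * s ^ k * q = α ∧ a * s ^ (k + 1) * p = β := by
  have hk : a * (β * q / (α * p)) ^ k * q = α := by
    rw [div_pow, mul_pow, mul_pow, h]
    field_simp
    ring
  refine ⟨β * q / (α * p), by positivity, hk, ?_⟩
  calc a * (β * q / (α * p)) ^ (k + 1) * p
      = a * (β * q / (α * p)) ^ k * q * (β / α) := by rw [pow_succ]; field_simp
    _ = β := by rw [hk, mul_div_cancel₀ _ hα]
namespace InvGauss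

noncomputable section

/-- The coordinate `m_i` of `ℂ[m_0, …, m_d]`, with the convention `m_i = 0` for `i > d`, so that
products of coordinates may be indexed by multisets of natural numbers. -/
def moment (d i : ℕ) : MvPolynomial (Fin (d + 1)) ℂ :=
  if h : i < d + 1 then X ⟨i, h⟩ else 0

variable {d : ℕ}

lemma moment_val (i : Fin (d + 1)) : moment d i = X i := dif_pos i.isLt

lemma invGaussMatrix_apply_zero (hd : 0 < d) (r : Fin 3) :
    invGaussMatrix d r ⟨0, hd⟩ = ![moment d 0 ^ 2, 0, moment d 1 ^ 2] r := by
  simp [invGaussMatrix, moment, hd]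

lemma invGaussMatrix_apply_succ {j : ℕ} (hj : j + 1 < d) (r : Fin 3) :
    invGaussMatrix d r ⟨j + 1, hj⟩ =
      ![moment d j, C (2 * (j : ℂ) + 1) * moment d (j + 1), moment d (j + 2)] r := by
  have hcoeff : 2 * ((j + 1 : ℕ) : ℂ) - 1 = 2 * (j : ℂ) + 1 := by
    push_cast
    ring
  simp only [invGaussMatrix, Matrix.of_apply, Nat.add_eq_zero_iff, one_ne_zero, and_false,
    if_false, hcoeff, moment, dif_pos (show j < d + 1 by omega),
    dif_pos (show j + 1 < d + 1 by omega), dif_pos (show j + 2 < d + 1 by omega),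
    Nat.add_sub_cancel]

lemma det_submatrix_mem {i j k : Fin d} (hij : i < j) (hjk : j < k) :
    ((invGaussMatrix d).submatrix id ![i, j, k]).det ∈ invGaussIdeal d := by
  refine Ideal.subset_span ⟨![i, j, k], Fin.strictMono_iff_lt_succ.mpr fun r => ?_, rfl⟩
  fin_cases r
  exacts [hij, hjk]

/-- The monomial `∏ m_i`, the product being over the entries of a multiset of indices. -/
def momentMonomial (d : ℕ) (s : Multiset ℕ) : MvPolynomial (Fin (d + 1)) ℂ :=
  (s.map (moment d)).prod

lemma momentMonomial_add (s t : Multiset ℕ) :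
    momentMonomial d (s + t) = momentMonomial d s * momentMonomial d t := by
  simp [momentMonomial]

/-- The weight `∑ (d² - i²)` of a multiset of indices. Among multisets in `[0, d]` of a given
cardinality it decreases as the sum of squares grows; it is the termination measure of the
straightening of monomials. -/
def weight (d : ℕ) (s : Multiset ℕ) : ℕ := (s.map fun i => d ^ 2 - i ^ 2).sum

lemma weight_add (s t : Multiset ℕ) : weight d (s + t) = weight d s + weight d t := by
  simp [weight]

lemma weight_add_sum_sq {s : Multiset ℕ} (hs : ∀ i ∈ s, i ≤ d) :
    weight d s + (s.map (· ^ 2)).sum = s.card * d ^ 2 := by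
  rw [weight, ← Multiset.sum_map_add, Multiset.map_congr rfl fun i hi =>
    Nat.sub_add_cancel (Nat.pow_le_pow_left (hs i hi) 2)]
  simp

lemma weight_lt_weight {s t : Multiset ℕ} (hs : ∀ i ∈ s, i ≤ d) (ht : ∀ i ∈ t, i ≤ d)
    (hcard : s.card = t.card) (hsq : (t.map (· ^ 2)).sum < (s.map (· ^ 2)).sum) :
    weight d s < weight d t := by
  have h₁ := weight_add_sum_sq hs
  have h₂ := weight_add_sum_sq ht
  rw [hcard] at h₁
  omega

/-- The polynomials that are congruent modulo `I₃(H)` to a linear combination of monomials of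
weight less than `N`. -/
def lowerSpan (d N : ℕ) : Submodule ℂ (MvPolynomial (Fin (d + 1)) ℂ) :=
  Submodule.span ℂ (momentMonomial d '' {t | weight d t < N}) ⊔
    (invGaussIdeal d).restrictScalars ℂ

/-- A multiset of indices is reducible if its monomial is congruent modulo `I₃(H)` to a linear
combination of monomials of smaller weight. -/
def IsReducible (d : ℕ) (s : Multiset ℕ) : Prop :=
  momentMonomial d s ∈ lowerSpan d (weight d s)

lemma mul_momentMonomial_mem_lowerSpan {N : ℕ} (t : Multiset ℕ)
    {F : MvPolynomial (Fin (d + 1)) ℂ} (hF : F ∈ lowerSpan d N) :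
    F * momentMonomial d t ∈ lowerSpan d (N + weight d t) := by
  suffices h : lowerSpan d N ≤ (lowerSpan d (N + weight d t)).comap
      (LinearMap.mulRight ℂ (momentMonomial d t)) from h hF
  refine sup_le (Submodule.span_le.mpr ?_) fun G hG =>
    Submodule.mem_sup_right (Ideal.mul_mem_right _ _ hG)
  rintro _ ⟨s, hs, rfl⟩
  refine Submodule.mem_sup_left (Submodule.subset_span ⟨s + t, ?_, momentMonomial_add s t⟩)
  exact (weight_add s t).trans_lt (Nat.add_lt_add_right hs _)

lemma IsReducible.mono {s t : Multiset ℕ} (hs : IsReducible d s) (hst : s ≤ t) :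
    IsReducible d t := by
  obtain ⟨u, rfl⟩ := Multiset.le_iff_exists_add.mp hst
  rw [IsReducible, momentMonomial_add, weight_add]
  exact mul_momentMonomial_mem_lowerSpan u hs

lemma isReducible_of_smul_mem {s : Multiset ℕ} (b : ℕ)
    (h : (2 * (b : ℂ) + 1) • momentMonomial d s ∈ lowerSpan d (weight d s)) :
    IsReducible d s :=
  (Submodule.smul_mem_iff _ (by exact_mod_cast (2 * b).succ_ne_zero)).mp h

lemma momentMonomial_mem_lowerSpan {N : ℕ} {t : Multiset ℕ} (h : weight d t < N) :
    momentMonomial d t ∈ lowerSpan d N :=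
  Submodule.mem_sup_left (Submodule.subset_span ⟨t, h, rfl⟩)

lemma mem_lowerSpan_of_mem_invGaussIdeal {N : ℕ} {F : MvPolynomial (Fin (d + 1)) ℂ}
    (hF : F ∈ invGaussIdeal d) : F ∈ lowerSpan d N :=
  Submodule.mem_sup_right hF

lemma det_mem_invGaussIdeal {i j k : ℕ} (hij : i < j) (hjk : j < k) (hk : k + 2 ≤ d) :
    Matrix.det !![moment d i, moment d j, moment d k;
      C (2 * (i : ℂ) + 1) * moment d (i + 1), C (2 * (j : ℂ) + 1) * moment d (j + 1),
        C (2 * (k : ℂ) + 1) * moment d (k + 1);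
      moment d (i + 2), moment d (j + 2), moment d (k + 2)] ∈ invGaussIdeal d := by
  have h := det_submatrix_mem (d := d) (i := ⟨i + 1, by omega⟩) (j := ⟨j + 1, by omega⟩)
    (k := ⟨k + 1, by omega⟩) (by simpa) (by simpa)
  convert! h using 2
  ext1 r c
  fin_cases c <;> fin_cases r <;> simp [invGaussMatrix_apply_succ]

lemma det_zero_mem_invGaussIdeal {j k : ℕ} (hjk : j < k) (hk : k + 2 ≤ d) :
    Matrix.det !![moment d 0 ^ 2, moment d j, moment d k;
      0, C (2 * (j : ℂ) + 1) * moment d (j + 1), C (2 * (k : ℂ) + 1) * moment d (k + 1);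
      moment d 1 ^ 2, moment d (j + 2), moment d (k + 2)] ∈ invGaussIdeal d := by
  have h := det_submatrix_mem (d := d) (i := ⟨0, by omega⟩) (j := ⟨j + 1, by omega⟩)
    (k := ⟨k + 1, by omega⟩) (by simp [Fin.lt_def]) (by simpa)
  convert! h using 2
  ext1 r c
  fin_cases c <;> fin_cases r <;> simp [invGaussMatrix_apply_zero, invGaussMatrix_apply_succ]

lemma isReducible_triple_of_lt {i j k : ℕ} (hij : i < j) (hjk : j < k) (hk : k + 2 ≤ d) :
    IsReducible d {i + 2, j + 1, k} := by
  have hlower : ∀ c : ℂ, ∀ p q r : ℕ, p ≤ d → q ≤ d → r ≤ d →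
      (i + 2) ^ 2 + (j + 1) ^ 2 + k ^ 2 < p ^ 2 + q ^ 2 + r ^ 2 →
      c • momentMonomial d {p, q, r} ∈ lowerSpan d (weight d {i + 2, j + 1, k}) := by
    intro c p q r hp hq hr hsq
    refine Submodule.smul_mem _ c (momentMonomial_mem_lowerSpan (weight_lt_weight ?_ ?_ rfl ?_))
    · simp [hp, hq, hr]
    · simp [show i + 2 ≤ d by omega, show j + 1 ≤ d by omega, show k ≤ d by omega]
    · simpa [add_assoc] using hsq
  have h₁ := hlower (2 * j + 1) i (j + 1) (k + 2) (by omega) (by omega) hk (by nlinarith)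
  have h₂ := hlower (2 * k + 1) i (j + 2) (k + 1) (by omega) (by omega) (by omega) (by nlinarith)
  have h₃ := hlower (2 * i + 1) (i + 1) j (k + 2) (by omega) (by omega) hk (by nlinarith)
  have h₄ := hlower (2 * k + 1) (i + 2) j (k + 1) (by omega) (by omega) (by omega) (by nlinarith)
  have h₅ := hlower (2 * i + 1) (i + 1) (j + 2) k (by omega) (by omega) (by omega) (by nlinarith)
  refine isReducible_of_smul_mem j ?_
  convert! sub_mem (add_mem (add_mem (sub_mem (sub_mem h₁ h₂) h₃) h₄) h₅)
    (mem_lowerSpan_of_mem_invGaussIdeal (det_mem_invGaussIdeal hij hjk hk)) using 1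
  simp only [momentMonomial, Multiset.insert_eq_cons, Multiset.map_cons, Multiset.map_singleton,
    Multiset.prod_cons, Multiset.prod_singleton, MvPolynomial.smul_eq_C_mul, Matrix.det_fin_three,
    Matrix.of_apply, Matrix.cons_val', Matrix.cons_val]
  ring

lemma isReducible_one_one_of_lt {j k : ℕ} (hjk : j < k) (hk : k + 2 ≤ d) :
    IsReducible d {1, 1, j + 1, k} := by
  have hlower : ∀ c : ℂ, ∀ e p q : ℕ, e ≤ 1 → p ≤ d → q ≤ d →
      1 + 1 + (j + 1) ^ 2 + k ^ 2 < e ^ 2 + e ^ 2 + p ^ 2 + q ^ 2 →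
      c • momentMonomial d {e, e, p, q} ∈ lowerSpan d (weight d {1, 1, j + 1, k}) := by
    intro c e p q he hp hq hsq
    refine Submodule.smul_mem _ c (momentMonomial_mem_lowerSpan (weight_lt_weight ?_ ?_ rfl ?_))
    · simp [hp, hq, show e ≤ d by omega]
    · simp [show 1 ≤ d by omega, show j + 1 ≤ d by omega, show k ≤ d by omega]
    · simpa [← add_assoc] using hsq
  have h₁ := hlower (2 * j + 1) 0 (j + 1) (k + 2) (by omega) (by omega) hk (by nlinarith)
  have h₂ := hlower (2 * k + 1) 0 (j + 2) (k + 1) (by omega) (by omega) (by omega) (by nlinarith)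
  have h₃ := hlower (2 * k + 1) 1 j (k + 1) le_rfl (by omega) (by omega) (by nlinarith)
  refine isReducible_of_smul_mem j ?_
  convert! sub_mem (add_mem (sub_mem h₁ h₂) h₃)
    (mem_lowerSpan_of_mem_invGaussIdeal (det_zero_mem_invGaussIdeal hjk hk)) using 1
  simp only [momentMonomial, Multiset.insert_eq_cons, Multiset.map_cons, Multiset.map_singleton,
    Multiset.prod_cons, Multiset.prod_singleton, MvPolynomial.smul_eq_C_mul, Matrix.det_fin_three,
    Matrix.of_apply, Matrix.cons_val', Matrix.cons_val]
  ring

lemma isReducible_of_two_lt_card_filter {s : Multiset ℕ}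
    (hs : 2 < (s.filter fun i => 2 ≤ i ∧ i + 2 ≤ d).card) : IsReducible d s := by
  obtain ⟨t, ht, hcard⟩ := exists_le_card_eq hs
  refine IsReducible.mono ?_ (ht.trans (Multiset.filter_le _ s))
  have hmem : ∀ i ∈ t, 2 ≤ i ∧ i + 2 ≤ d := fun i hi =>
    (Multiset.mem_filter.mp (Multiset.mem_of_le ht hi)).2
  obtain ⟨l, hl, rfl⟩ : ∃ l : List ℕ, l.Pairwise (· ≤ ·) ∧ ↑l = t :=
    ⟨t.sort, t.pairwise_sort _, t.sort_eq _⟩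
  obtain ⟨a, b, c, rfl⟩ := List.length_eq_three.mp hcard
  simp only [Multiset.mem_coe, List.mem_cons, List.not_mem_nil, or_false, forall_eq_or_imp,
    forall_eq, List.pairwise_cons] at hmem hl
  obtain ⟨i, rfl⟩ := Nat.exists_eq_add_of_le' hmem.1.1
  obtain ⟨j, rfl⟩ := Nat.exists_eq_add_of_le' (one_le_two.trans hmem.2.1.1)
  exact isReducible_triple_of_lt (by omega) (by omega) hmem.2.2.2

lemma isReducible_one_one_add_of_one_lt_card_filter {r : Multiset ℕ}
    (hr : 1 < (r.filter fun i => 1 ≤ i ∧ i + 2 ≤ d).card) : IsReducible d ({1, 1} + r) := by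
  obtain ⟨t, ht, hcard⟩ := exists_le_card_eq hr
  refine IsReducible.mono ?_ (Multiset.add_le_add_left (ht.trans (Multiset.filter_le _ r)))
  have hmem : ∀ i ∈ t, 1 ≤ i ∧ i + 2 ≤ d := fun i hi =>
    (Multiset.mem_filter.mp (Multiset.mem_of_le ht hi)).2
  obtain ⟨l, hl, rfl⟩ : ∃ l : List ℕ, l.Pairwise (· ≤ ·) ∧ ↑l = t :=
    ⟨t.sort, t.pairwise_sort _, t.sort_eq _⟩
  obtain ⟨a, b, rfl⟩ := List.length_eq_two.mp hcard
  simp only [Multiset.mem_coe, List.mem_cons, List.not_mem_nil, or_false, forall_eq_or_imp,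
    forall_eq, List.pairwise_cons] at hmem hl
  obtain ⟨j, rfl⟩ := Nat.exists_eq_add_of_le' hmem.1.1
  exact isReducible_one_one_of_lt (by omega) hmem.2.2

/-- The coordinate `m_{i+k}` for `i > 0`, and the constant `1` for `i = 0`: this lets monomials of
degree at most `n` in the coordinates `m_{k+1}, m_{k+2}, …` be written as products of exactly `n`
factors. -/
def paddedMoment (d k i : ℕ) : MvPolynomial (Fin (d + 1)) ℂ :=
  if i = 0 then 1 else moment d (i + k)

lemma exists_paddedMoment_eq {k n : ℕ} (hn : 0 < n) {t : Multiset ℕ} (ht : t.card ≤ 1)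
    (hmem : ∀ i ∈ t, k < i ∧ i < n + k) :
    ∃ i : Fin n, paddedMoment d k i = momentMonomial d t := by
  rcases Nat.le_one_iff_eq_zero_or_eq_one.mp ht with h | h
  · obtain rfl := Multiset.card_eq_zero.mp h
    exact ⟨⟨0, hn⟩, by simp [paddedMoment, momentMonomial]⟩
  · obtain ⟨a, rfl⟩ := Multiset.card_eq_one.mp h
    obtain ⟨hka, hak⟩ := hmem a (Multiset.mem_singleton_self a)
    refine ⟨⟨a - k, by omega⟩, ?_⟩
    simp [paddedMoment, momentMonomial, Nat.sub_ne_zero_of_lt hka, Nat.sub_add_cancel hka.le]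

lemma exists_paddedMoment_mul_eq {k n : ℕ} (hn : 0 < n) {t : Multiset ℕ} (ht : t.card ≤ 2)
    (hmem : ∀ i ∈ t, k < i ∧ i < n + k) :
    ∃ i j : Fin n, paddedMoment d k i * paddedMoment d k j = momentMonomial d t := by
  obtain ⟨t₁, t₂, ht₁, ht₂, rfl⟩ : ∃ t₁ t₂ : Multiset ℕ, t₁.card ≤ 1 ∧ t₂.card ≤ 1 ∧
      t₁ + t₂ = t := by
    obtain ⟨t₁, hle, hcard⟩ := exists_le_card_eq (min_le_left t.card 1)
    refine ⟨t₁, t - t₁, by omega, ?_, add_tsub_cancel_of_le hle⟩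
    rw [Multiset.card_sub hle]
    omega
  obtain ⟨i, hi⟩ := exists_paddedMoment_eq (d := d) hn ht₁ fun i hi =>
    hmem i (Multiset.mem_add.mpr (Or.inl hi))
  obtain ⟨j, hj⟩ := exists_paddedMoment_eq (d := d) hn ht₂ fun j hj =>
    hmem j (Multiset.mem_add.mpr (Or.inr hj))
  exact ⟨i, j, by rw [hi, hj, momentMonomial_add]⟩

/-- The index set of the standard monomials, see `standardMonomial`. -/
abbrev StandardIndex (d : ℕ) : Type := (Sym2 (Fin (d - 2)) × Fin 2) ⊕ Fin (d - 1)

lemma card_standardIndex (hd : 2 ≤ d) : Fintype.card (StandardIndex d) = (d - 1) * (d - 1) := by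
  obtain ⟨n, rfl⟩ := Nat.exists_eq_add_of_le' hd
  have h : (n + 1) * n / 2 * 2 = (n + 1) * n :=
    Nat.div_mul_cancel (Nat.even_mul_pred_self (n + 1)).two_dvd
  simp only [Fintype.card_sum, Fintype.card_prod, Sym2.card, Fintype.card_fin,
    Nat.choose_two_right, Nat.add_sub_cancel, h, Nat.add_succ_sub_one]
  ring

/-- The standard monomials: those in the coordinates `m_1, …, m_{d-2}` that are not divisible by a
reducible monomial. They are the `m_a m_b m_1^e` with `a, b ∈ {2, …, d - 2}` and `e ≤ 1`, and the
`m_1^2 m_a` with `a ∈ {1, …, d - 2}`, where `m_a` and `m_b` may also be absent. -/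
def standardMonomial (d : ℕ) : StandardIndex d → MvPolynomial (Fin (d + 1)) ℂ
  | .inl (z, e) => (z.map fun i : Fin (d - 2) => paddedMoment d 1 i).mul * moment d 1 ^ (e : ℕ)
  | .inr j => moment d 1 ^ 2 * paddedMoment d 0 j

/-- The indices of the coordinates `m_0`, `m_{d-1}`, `m_d`, over which `S / I₃(H)` is finite. -/
def freeIndices (d : ℕ) : Set (Fin (d + 1)) := {i | (i : ℕ) = 0 ∨ d ≤ i + 1}

/-- The polynomials that are congruent modulo `I₃(H)` to a combination of standard monomials with
coefficients in `ℂ[m_0, m_{d-1}, m_d]`. -/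
def standardSpan (d : ℕ) : Submodule (supported ℂ (freeIndices d)) (MvPolynomial (Fin (d + 1)) ℂ) :=
  Submodule.span (supported ℂ (freeIndices d)) (Set.range (standardMonomial d)) ⊔
    (invGaussIdeal d).restrictScalars (supported ℂ (freeIndices d))

lemma standardMonomial_mem_standardSpan (p : StandardIndex d) :
    standardMonomial d p ∈ standardSpan d :=
  Submodule.mem_sup_left (Submodule.subset_span (Set.mem_range_self p))

lemma momentMonomial_mem_supported {t : Multiset ℕ} (ht : ∀ i ∈ t, i = 0 ∨ d ≤ i + 1) :
    momentMonomial d t ∈ supported ℂ (freeIndices d) := by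
  refine multiset_prod_mem _ fun F hF => ?_
  obtain ⟨i, hi, rfl⟩ := Multiset.mem_map.mp hF
  rw [moment]
  split_ifs with h
  · exact (X_mem_supported (R := ℂ) (s := freeIndices d)).mpr (ht i hi)
  · exact zero_mem _

lemma momentMonomial_mul_mem_standardSpan {t : Multiset ℕ} (ht : ∀ i ∈ t, i = 0 ∨ d ≤ i + 1)
    {F : MvPolynomial (Fin (d + 1)) ℂ} (hF : F ∈ standardSpan d) :
    momentMonomial d t * F ∈ standardSpan d :=
  (standardSpan d).smul_mem ⟨_, momentMonomial_mem_supported ht⟩ hF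

lemma momentMonomial_mem_standardSpan_of_card_filter_le_two (hd : 3 ≤ d) {s : Multiset ℕ}
    (h₁ : s.count 1 < 2) (hs : (s.filter fun i => 2 ≤ i ∧ i + 2 ≤ d).card ≤ 2) :
    momentMonomial d s ∈ standardSpan d := by
  obtain ⟨i, j, hij⟩ := exists_paddedMoment_mul_eq (d := d) (k := 1) (n := d - 2) (by omega) hs
    fun i hi => by
      have := (Multiset.mem_filter.mp hi).2
      omega
  have hstd : momentMonomial d (Multiset.replicate (s.count 1) 1 +
      s.filter fun i => 2 ≤ i ∧ i + 2 ≤ d) ∈ standardSpan d := by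
    rw [momentMonomial_add, ← hij, mul_comm]
    simpa [standardMonomial, momentMonomial] using
      standardMonomial_mem_standardSpan (d := d) (.inl (s(i, j), ⟨s.count 1, h₁⟩))
  have hsplit : s = (s.filter fun i => ¬ (2 ≤ i ∧ i + 2 ≤ d) ∧ i ≠ 1) +
      (Multiset.replicate (s.count 1) 1 + s.filter fun i => 2 ≤ i ∧ i + 2 ≤ d) := by
    ext i
    simp only [Multiset.count_add, Multiset.count_filter, Multiset.count_replicate]
    grind
  rw [hsplit, momentMonomial_add]
  refine momentMonomial_mul_mem_standardSpan (fun i hi => ?_) hstd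
  have := (Multiset.mem_filter.mp hi).2
  omega

lemma momentMonomial_one_one_add_mem_standardSpan (hd : 3 ≤ d) {r : Multiset ℕ}
    (hr : (r.filter fun i => 1 ≤ i ∧ i + 2 ≤ d).card ≤ 1) :
    momentMonomial d ({1, 1} + r) ∈ standardSpan d := by
  obtain ⟨i, hi⟩ := exists_paddedMoment_eq (d := d) (k := 0) (n := d - 1) (by omega) hr
    fun i hi => by
      have := (Multiset.mem_filter.mp hi).2
      omega
  have hstd : momentMonomial d ({1, 1} + r.filter fun i => 1 ≤ i ∧ i + 2 ≤ d) ∈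
      standardSpan d := by
    rw [momentMonomial_add, ← hi]
    simpa [standardMonomial, momentMonomial, sq] using
      standardMonomial_mem_standardSpan (d := d) (.inr i)
  have hsplit : {1, 1} + r = r.filter (fun i => ¬ (1 ≤ i ∧ i + 2 ≤ d)) +
      ({1, 1} + r.filter fun i => 1 ≤ i ∧ i + 2 ≤ d) := by
    rw [add_left_comm, add_comm (r.filter _), Multiset.filter_add_not]
  rw [hsplit, momentMonomial_add]
  refine momentMonomial_mul_mem_standardSpan (fun i hi => ?_) hstd
  have := (Multiset.mem_filter.mp hi).2
  omega

lemma isReducible_or_mem_standardSpan (hd : 3 ≤ d) (s : Multiset ℕ) :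
    IsReducible d s ∨ momentMonomial d s ∈ standardSpan d := by
  by_cases h₁ : s.count 1 < 2
  · rcases lt_or_ge 2 (s.filter fun i => 2 ≤ i ∧ i + 2 ≤ d).card with h | h
    · exact Or.inl (isReducible_of_two_lt_card_filter h)
    · exact Or.inr (momentMonomial_mem_standardSpan_of_card_filter_le_two hd h₁ h)
  · obtain ⟨r, rfl⟩ : ∃ r, s = {1, 1} + r :=
      Multiset.le_iff_exists_add.mp (Multiset.le_count_iff_replicate_le.mp (not_lt.mp h₁))
    rcases lt_or_ge 1 (r.filter fun i => 1 ≤ i ∧ i + 2 ≤ d).card with h | h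
    · exact Or.inl (isReducible_one_one_add_of_one_lt_card_filter h)
    · exact Or.inr (momentMonomial_one_one_add_mem_standardSpan hd h)

lemma momentMonomial_mem_standardSpan (hd : 3 ≤ d) (s : Multiset ℕ) :
    momentMonomial d s ∈ standardSpan d := by
  induction hN : weight d s using Nat.strong_induction_on generalizing s with
  | _ N ih =>
    refine (isReducible_or_mem_standardSpan hd s).elim (fun hs => ?_) id
    suffices h : lowerSpan d (weight d s) ≤ (standardSpan d).restrictScalars ℂ from h hs
    refine sup_le (Submodule.span_le.mpr ?_) fun F hF => Submodule.mem_sup_right hF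
    rintro _ ⟨t, ht, rfl⟩
    exact ih _ (hN ▸ ht) t rfl

lemma span_range_momentMonomial : Submodule.span ℂ (Set.range (momentMonomial d)) = ⊤ := by
  refine top_le_iff.mp ((basisMonomials (Fin (d + 1)) ℂ).span_eq.ge.trans
    (Submodule.span_mono ?_))
  rintro _ ⟨n, rfl⟩
  refine ⟨n.toMultiset.map Fin.val, ?_⟩
  simp only [momentMonomial, Multiset.map_map, Function.comp_apply, moment_val, coe_basisMonomials]
  rw [monomial_eq, C_1, one_mul, Finsupp.toMultiset_map, Finsupp.prod_toMultiset,
    Finsupp.prod_mapDomain_index (fun _ => pow_zero _) fun _ => pow_add _]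

lemma standardSpan_eq_top (hd : 3 ≤ d) : standardSpan d = ⊤ := by
  suffices h : (⊤ : Submodule ℂ _) ≤ (standardSpan d).restrictScalars ℂ from
    top_le_iff.mp fun F _ => h Submodule.mem_top
  rw [← span_range_momentMonomial, Submodule.span_le]
  rintro _ ⟨s, rfl⟩
  exact momentMonomial_mem_standardSpan hd s

/-- The reindexed Bessel polynomials of Krall and Frink: `besselPoly R (j + 1)` is the Bessel
polynomial of degree `j`. The `j`-th moment of the inverse Gaussian distribution with mean `μ` and
shape `λ` is `μ ^ j` times the value of `besselPoly ℝ j` at `μ / λ`. -/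
def besselPoly (R : Type*) [CommRing R] : ℕ → Polynomial R
  | 0 => 1
  | 1 => 1
  | j + 2 => Polynomial.C (2 * (j : R) + 1) * Polynomial.X * besselPoly R (j + 1) + besselPoly R j

lemma besselPoly_add_two (R : Type*) [CommRing R] (j : ℕ) :
    besselPoly R (j + 2) =
      Polynomial.C (2 * (j : R) + 1) * Polynomial.X * besselPoly R (j + 1) + besselPoly R j := by
  rw [besselPoly]

lemma isCoprime_besselPoly (R : Type*) [CommRing R] (j : ℕ) :
    IsCoprime (besselPoly R j) (besselPoly R (j + 1)) := by
  induction j with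
  | zero => exact isCoprime_one_left
  | succ j ih =>
    rw [besselPoly_add_two, add_comm (_ * _)]
    exact ih.symm.add_mul_right_right _

lemma natDegree_besselPoly_succ (R : Type*) [CommRing R] [IsDomain R] [CharZero R] (j : ℕ) :
    (besselPoly R (j + 1)).natDegree = j := by
  induction j using Nat.twoStepInduction with
  | zero => exact Polynomial.natDegree_one
  | one => simpa [besselPoly] using Polynomial.natDegree_X_add_C (1 : R)
  | more j ih ih' =>
    have hcoeff : (2 * ((j + 1 : ℕ) : R) + 1) ≠ 0 := by exact_mod_cast (2 * (j + 1)).succ_ne_zero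
    have hne : besselPoly R (j + 1 + 1) ≠ 0 := by
      rintro h
      simp [h] at ih'
    have hlead : (Polynomial.C (2 * ((j + 1 : ℕ) : R) + 1) * Polynomial.X *
        besselPoly R (j + 1 + 1)).natDegree = j + 2 := by
      rw [mul_assoc, Polynomial.natDegree_C_mul hcoeff, Polynomial.natDegree_X_mul hne, ih']
    rw [besselPoly_add_two, Polynomial.natDegree_add_eq_left_of_natDegree_lt, hlead]
    rw [hlead, ih]
    omega

/-- The parametrisation `m_j = a s^j q_j(t)` of the (affine cone over the) inverse Gaussian moment
variety, where `q_j` is `besselPoly ℂ j`, as a homomorphism into `ℂ[a, s, t]`. -/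
def momentParam (d : ℕ) : MvPolynomial (Fin (d + 1)) ℂ →ₐ[ℂ] MvPolynomial (Fin 3) ℂ :=
  aeval fun j => X 0 * X 1 ^ (j : ℕ) * Polynomial.aeval (X 2) (besselPoly ℂ j)

/-- The point of the moment variety with parameters `a`, `s`, `t`, see `momentParam`. -/
def momentPoint (d : ℕ) (a s t : ℂ) : Fin (d + 1) → ℂ :=
  fun j => a * s ^ (j : ℕ) * (besselPoly ℂ j).eval t

lemma momentParam_moment {i : ℕ} (hi : i ≤ d) :
    momentParam d (moment d i) = X 0 * X 1 ^ i * Polynomial.aeval (X 2) (besselPoly ℂ i) := by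
  rw [moment, dif_pos (Nat.lt_succ_of_le hi), momentParam, aeval_X]

lemma invGaussIdeal_le_ker_momentParam : invGaussIdeal d ≤ RingHom.ker (momentParam d) := by
  rw [invGaussIdeal, Ideal.span_le]
  rintro _ ⟨s, -, rfl⟩
  rw [SetLike.mem_coe, RingHom.mem_ker, AlgHom.map_det, ← Matrix.exists_vecMul_eq_zero_iff]
  refine ⟨![X 1 ^ 2, X 1 * X 2, -1], fun h => by simpa using congrFun h 2, ?_⟩
  ext1 c
  simp only [Matrix.vecMul, dotProduct, Fin.sum_univ_three, AlgHom.mapMatrix_apply,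
    Matrix.map_apply, Matrix.submatrix_apply, id]
  obtain ⟨j, hj⟩ := s c
  cases j with
  | zero =>
    simp only [Matrix.cons_val_zero, Matrix.cons_val_one, Matrix.cons_val,
      invGaussMatrix_apply_zero, momentParam_moment d.zero_le,
      momentParam_moment (Nat.one_le_of_lt hj), besselPoly, map_pow, map_one, map_zero,
      Pi.zero_apply]
    ring
  | succ j =>
    simp only [Matrix.cons_val_zero, Matrix.cons_val_one, Matrix.cons_val,
      invGaussMatrix_apply_succ, momentParam_moment (show j ≤ d by omega),
      momentParam_moment (show j + 1 ≤ d by omega), momentParam_moment (show j + 2 ≤ d by omega),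
      besselPoly, map_mul, map_add, algHom_C, algebraMap_eq, Polynomial.aeval_C,
      Polynomial.aeval_X, Pi.zero_apply]
    ring

lemma momentPoint_mem_zeroLocus (a s t : ℂ) :
    momentPoint d a s t ∈ zeroLocus ℂ (RingHom.ker (momentParam d)) := by
  have hcomp : (aeval ![a, s, t]).comp (momentParam d) = aeval (momentPoint d a s t) := by
    ext j
    rw [AlgHom.comp_apply, momentParam, aeval_X, map_mul, ← Polynomial.aeval_algHom_apply]
    simp [momentPoint, Polynomial.coe_aeval_eq_eval]
  intro F hF
  rw [← hcomp, AlgHom.comp_apply, RingHom.mem_ker.mp hF, map_zero]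

lemma eval_momentPoint_moment {i : ℕ} (hi : i ≤ d) (a s t : ℂ) :
    eval (momentPoint d a s t) (moment d i) = a * s ^ i * (besselPoly ℂ i).eval t := by
  rw [moment, dif_pos (Nat.lt_succ_of_le hi), eval_X, momentPoint]

lemma eq_of_momentPoint_eq (hd : 2 ≤ d) {a s s' t t' : ℂ} (ha : a ≠ 0) (hs : s ≠ 0)
    (h : momentPoint d a s t = momentPoint d a s' t') : t = t' := by
  have h₁ := congrArg (eval · (moment d 1)) h
  have h₂ := congrArg (eval · (moment d 2)) h
  have hss' : s = s' := by
    simpa [eval_momentPoint_moment, one_le_two.trans hd, besselPoly, ha] using h₁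
  subst hss'
  simpa [eval_momentPoint_moment, hd, besselPoly, ha, hs] using h₂

lemma eqOn_freeIndices {v w : Fin (d + 1) → ℂ}
    (h₀ : eval v (moment d 0) = eval w (moment d 0))
    (h₁ : eval v (moment d (d - 1)) = eval w (moment d (d - 1)))
    (h₂ : eval v (moment d d) = eval w (moment d d)) : (freeIndices d).EqOn v w := by
  intro i hi
  suffices h : eval v (moment d i) = eval w (moment d i) by simpa [moment_val] using h
  obtain hi | hi | hi : (i : ℕ) = 0 ∨ (i : ℕ) = d - 1 ∨ (i : ℕ) = d := by
    have := i.isLt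
    have : (i : ℕ) = 0 ∨ d ≤ i + 1 := hi
    omega
  all_goals rwa [hi]

/-- After elimination of `s`, the points of the moment variety with prescribed `m_0`, `m_{d-1}`,
`m_d` correspond to the roots `t` of this polynomial, where `c = m_0 m_d^{d-1} / m_{d-1}^d`. -/
def fiberPoly (d : ℕ) (c : ℂ) : Polynomial ℂ :=
  besselPoly ℂ d ^ (d - 1) - Polynomial.C c * besselPoly ℂ (d - 1) ^ d

lemma exists_finset_forall_card_roots_fiberPoly (hd : 2 ≤ d) :
    ∃ bad : Finset ℂ, ∀ c ∉ bad, (fiberPoly d c).roots.toFinset.card = (d - 1) * (d - 1) := by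
  obtain ⟨k, rfl⟩ := Nat.exists_eq_add_of_le' hd
  have hP : (besselPoly ℂ (k + 2) ^ (k + 1)).natDegree = (k + 1) * (k + 1) := by
    rw [Polynomial.natDegree_pow, natDegree_besselPoly_succ]
  have hQ : (besselPoly ℂ (k + 1) ^ (k + 2)).natDegree = (k + 2) * k := by
    rw [Polynomial.natDegree_pow, natDegree_besselPoly_succ]
  have h := exists_finset_forall_card_roots_sub_C_mul
    ((isCoprime_besselPoly ℂ (k + 1)).symm.pow (m := k + 1) (n := k + 2))
    (by rw [hP, hQ]; nlinarith)
  rwa [hP] at h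

lemma exists_momentPoint_eqOn_freeIndices (hd : 2 ≤ d) {v : Fin (d + 1) → ℂ}
    (h₀ : eval v (moment d 0) ≠ 0) (h₁ : eval v (moment d (d - 1)) ≠ 0)
    (h₂ : eval v (moment d d) ≠ 0) {t : ℂ}
    (ht : (fiberPoly d (eval v (moment d 0) * eval v (moment d d) ^ (d - 1) /
      eval v (moment d (d - 1)) ^ d)).IsRoot t) :
    ∃ s, s ≠ 0 ∧ (freeIndices d).EqOn (momentPoint d (eval v (moment d 0)) s t) v := by
  obtain ⟨k, rfl⟩ := Nat.exists_eq_add_of_le' (one_le_two.trans hd)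
  simp only [Nat.add_sub_cancel] at *
  obtain ⟨hp, hq⟩ := eval_ne_zero_of_isRoot_pow_sub_C_mul_pow (isCoprime_besselPoly ℂ k).symm
    (by omega) (by omega) (by positivity) ht
  obtain ⟨s, hs, hα, hβ⟩ := exists_mul_pow_mul_eq h₀ h₁ h₂ hp hq
    (by simpa [fiberPoly, sub_eq_zero] using ht)
  refine ⟨s, hs, eqOn_freeIndices ?_ ?_ ?_⟩ <;> rw [eval_momentPoint_moment (by omega)]
  · simp [besselPoly]
  · exact hα
  · exact hβ

lemma exists_fiber_embedding (hd : 2 ≤ d) {v : Fin (d + 1) → ℂ}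
    (h₀ : eval v (moment d 0) ≠ 0) (h₁ : eval v (moment d (d - 1)) ≠ 0)
    (h₂ : eval v (moment d d) ≠ 0)
    (hcard : (fiberPoly d (eval v (moment d 0) * eval v (moment d d) ^ (d - 1) /
      eval v (moment d (d - 1)) ^ d)).roots.toFinset.card = (d - 1) * (d - 1)) :
    ∃ z : StandardIndex d ↪ (Fin (d + 1) → ℂ), ∀ p,
      z p ∈ zeroLocus ℂ (RingHom.ker (momentParam d)) ∧ (freeIndices d).EqOn (z p) v := by
  obtain ⟨t, ht⟩ := Function.Embedding.exists_of_card_le_finset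
    ((card_standardIndex hd).trans hcard.symm).le
  have hroot : ∀ p, _ := fun p => Polynomial.isRoot_of_mem_roots
    (Multiset.mem_toFinset.mp (ht (Set.mem_range_self p)))
  choose s hs hsv using fun p => exists_momentPoint_eqOn_freeIndices hd h₀ h₁ h₂ (hroot p)
  exact ⟨⟨fun p => momentPoint d _ (s p) (t p),
    fun p p' h => t.injective (eq_of_momentPoint_eq hd h₀ (hs p) h)⟩,
    fun p => ⟨momentPoint_mem_zeroLocus _ _ _, hsv p⟩⟩

lemma moment_ne_zero {i : ℕ} (hi : i ≤ d) : moment d i ≠ 0 := by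
  rw [moment, dif_pos (Nat.lt_succ_of_le hi)]
  exact X_ne_zero _

lemma moment_zero_mul_pow_sub_ne_zero (hd : 2 ≤ d) (r : ℂ) :
    moment d 0 * moment d d ^ (d - 1) - C r * moment d (d - 1) ^ d ≠ 0 := fun h => by
  have heval := congrArg (eval fun i : Fin (d + 1) => if (i : ℕ) = 0 then r + 1 else 1) h
  simp [moment, show d ≠ 0 by omega, show d - 1 ≠ 0 by omega, show d - 1 < d + 1 by omega] at heval

/-- Where this polynomial in `m_0`, `m_{d-1}`, `m_d` does not vanish, none of the three coordinates
vanishes and `m_0 m_d^{d-1} / m_{d-1}^d` lies outside the set `bad`. -/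
def discriminant (d : ℕ) (bad : Finset ℂ) : MvPolynomial (Fin (d + 1)) ℂ :=
  moment d 0 * moment d (d - 1) * moment d d *
    ∏ r ∈ bad, (moment d 0 * moment d d ^ (d - 1) - C r * moment d (d - 1) ^ d)

lemma discriminant_ne_zero (hd : 2 ≤ d) (bad : Finset ℂ) : discriminant d bad ≠ 0 :=
  mul_ne_zero (mul_ne_zero (mul_ne_zero (moment_ne_zero d.zero_le) (moment_ne_zero d.pred_le))
    (moment_ne_zero le_rfl)) (Finset.prod_ne_zero_iff.mpr fun r _ =>
      moment_zero_mul_pow_sub_ne_zero hd r)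

lemma eval_ne_zero_of_eval_discriminant_ne_zero {bad : Finset ℂ} {v : Fin (d + 1) → ℂ}
    (hv : eval v (discriminant d bad) ≠ 0) :
    eval v (moment d 0) ≠ 0 ∧ eval v (moment d (d - 1)) ≠ 0 ∧ eval v (moment d d) ≠ 0 ∧
      eval v (moment d 0) * eval v (moment d d) ^ (d - 1) /
        eval v (moment d (d - 1)) ^ d ∉ bad := by
  simp only [discriminant, map_mul, map_prod, map_sub, map_pow, eval_C, mul_ne_zero_iff,
    Finset.prod_ne_zero_iff] at hv
  obtain ⟨⟨⟨h₀, h₁⟩, h₂⟩, hbad⟩ := hv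
  refine ⟨h₀, h₁, h₂, fun hmem => hbad _ hmem ?_⟩
  rw [div_mul_cancel₀ _ (pow_ne_zero _ h₁), sub_self]

end

end InvGauss

/-- For every `d ≥ 3`, the ideal `I₃(H)` of the inverse Gaussian moment variety is prime. -/
theorem invGaussIdeal_isPrime (d : ℕ) (hd : 3 ≤ d) : (invGaussIdeal d).IsPrime := by
  obtain ⟨bad, hbad⟩ := InvGauss.exists_finset_forall_card_roots_fiberPoly (le_of_lt hd)
  suffices h : invGaussIdeal d = RingHom.ker (InvGauss.momentParam d) by
    rw [h]
    exact RingHom.ker_isPrime _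
  refine eq_of_span_supported_of_generic_fiber InvGauss.invGaussIdeal_le_ker_momentParam
    (InvGauss.standardSpan_eq_top hd) (InvGauss.discriminant_ne_zero (le_of_lt hd) bad)
    fun v hv => ?_
  obtain ⟨h₀, h₁, h₂, hc⟩ := InvGauss.eval_ne_zero_of_eval_discriminant_ne_zero hv
  exact InvGauss.exists_fiber_embedding (le_of_lt hd) h₀ h₁ h₂ (hbad _ hc)
end

section
/- For every integer d ≥ 3, the quotient ring ℂ[m_0,…,m_d]/I_3(H) has Krull dimension 3. -/
open MvPolynomial

/-!
A point of the variety of `I₃(H)` with coordinates `m₀, …, m_d` in a field is one where the rows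
of `H` satisfy a nontrivial linear relation `(α, β, γ)`, that is,
`α m₀² + γ m₁² = 0` and `α mₙ + (2n + 1) β mₙ₊₁ + γ mₙ₊₂ = 0`.

* If `γ ≠ 0`, the recurrence runs forwards, and all coordinates are polynomials in
  `m₀`, `m₁ / m₀` and `β / γ`.
* If `γ = 0` and `α ≠ 0`, it runs backwards, and all coordinates are polynomials in
  `m_d`, `m_{d-1}` and `β / α`.
* If `α = γ = 0`, all coordinates except `m₀` and `m_d` vanish.

So every residue field has transcendence degree at most `3`, which bounds the dimension from above.
The first family is the cone `mₙ = t · 𝔼[Yⁿ]` over the moments of inverse Gaussian variables `Y`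
with mean `μ` and variance `μν`, a domain of dimension `3`: specialising `ν`, `μ` and `t` to `0`
one after the other gives a chain of four primes.
-/

universe u

section KrullDimension

theorem ringKrullDim_le_of_isIntegral {A B : Type*} [CommRing A] [CommRing B] [Algebra A B]
    [Algebra.IsIntegral A B] : ringKrullDim B ≤ ringKrullDim A :=
  Order.krullDim_le_of_strictMono (PrimeSpectrum.comap (algebraMap A B))
    fun P Q hPQ => Ideal.IsIntegral.comap_lt_comap (I := P.asIdeal) (J := Q.asIdeal) hPQ

theorem ringKrullDim_eq_iSup_quotient {A : Type*} [CommRing A] :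
    ringKrullDim A = ⨆ P : PrimeSpectrum A, ringKrullDim (A ⧸ P.asIdeal) := by
  refine (Order.krullDim_eq_iSup_coheight).trans (iSup_congr fun P => ?_)
  rw [ringKrullDim_quotient, Order.coheight_eq_krullDim_Ici]
  rfl

theorem toENat_trdeg_adjoin_range_le {k ι A : Type*} [CommRing k] [IsDomain k] [CommRing A]
    [Algebra k A] (g : ι → A) :
    Cardinal.toENat (Algebra.trdeg k (Algebra.adjoin k (Set.range g))) ≤ ENat.card ι := by
  have h := lift_trdeg_le_of_surjective (aeval (R := k) g).rangeRestrict
    (aeval (R := k) g).rangeRestrict_surjective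
  rw [← Algebra.adjoin_range_eq_range_aeval] at h
  simpa [ENat.card] using Cardinal.toENat.monotone' h

variable {k : Type*} [Field k]

theorem ringKrullDim_le_trdeg (A : Type*) [CommRing A] [IsDomain A] [Algebra k A]
    [Algebra.FiniteType k A] :
    ringKrullDim A ≤ Cardinal.toENat (Algebra.trdeg k A) := by
  obtain ⟨s, g, hg, hgInt⟩ := exists_integral_inj_algHom_of_fg k A
  algebraize [g.toRingHom]
  have hs : (s : ℕ∞) ≤ Cardinal.toENat (Algebra.trdeg k A) := by
    simpa using Cardinal.toENat.monotone' (lift_trdeg_le_of_injective g hg)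
  calc ringKrullDim A
      ≤ ringKrullDim (MvPolynomial (Fin s) k) := ringKrullDim_le_of_isIntegral
    _ = s := by simp
    _ ≤ Cardinal.toENat (Algebra.trdeg k A) := by exact_mod_cast hs

theorem ringKrullDim_le_of_forall_range_le_adjoin {A : Type u} [CommRing A] [Algebra k A]
    [Algebra.FiniteType k A] (ι : Type*)
    (h : ∀ (K : Type u) [Field K] [Algebra k K] (φ : A →ₐ[k] K),
      ∃ g : ι → K, φ.range ≤ Algebra.adjoin k (Set.range g)) :
    ringKrullDim A ≤ ENat.card ι := by
  rw [ringKrullDim_eq_iSup_quotient]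
  refine iSup_le fun P => (ringKrullDim_le_trdeg (k := k) _).trans ?_
  let K := FractionRing (A ⧸ P.asIdeal)
  let ψ : A ⧸ P.asIdeal →ₐ[k] K := IsScalarTower.toAlgHom k _ K
  obtain ⟨g, hg⟩ := h K (ψ.comp (Ideal.Quotient.mkₐ k P.asIdeal))
  have hψ (x : A ⧸ P.asIdeal) : ψ x ∈ Algebra.adjoin k (Set.range g) := by
    obtain ⟨y, rfl⟩ := Ideal.Quotient.mk_surjective x
    exact hg ⟨y, rfl⟩
  have hψ_inj : Function.Injective (ψ.codRestrict _ hψ) := fun x y hxy =>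
    FaithfulSMul.algebraMap_injective _ K (congrArg Subtype.val hxy)
  exact_mod_cast (Cardinal.toENat.monotone' (trdeg_le_of_injective _ hψ_inj)).trans
    (toENat_trdeg_adjoin_range_le g)

end KrullDimension

section Minors

open Matrix

theorem det_submatrix_eq_zero_of_vecMul_eq_zero {m n A : Type*} [Fintype m] [DecidableEq m]
    [CommRing A] [IsDomain A] {M : Matrix m n A} {v : m → A} (hv : v ≠ 0) (h : v ᵥ* M = 0)
    (s : m → n) : (M.submatrix id s).det = 0 :=
  Matrix.exists_vecMul_eq_zero_iff.mp ⟨v, hv, funext fun j => congrFun h (s j)⟩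

variable {n K : Type*} [Finite n] [LinearOrder n] [Field K] {r : ℕ} {M : Matrix (Fin r) n K}

theorem exists_det_submatrix_ne_zero (hM : LinearIndependent K M.row) :
    ∃ s : Fin r → n, StrictMono s ∧ (M.submatrix id s).det ≠ 0 := by
  have := Fintype.ofFinite n
  obtain ⟨κ, c, hc, hspan, hli⟩ := exists_linearIndependent' K M.col
  have : Fintype κ := Fintype.ofInjective c hc
  have hcard : (Finset.univ.map ⟨c, hc⟩).card = r := by
    rw [Finset.card_map, Finset.card_univ, ← finrank_span_eq_card hli, hspan,
      ← Matrix.rank_eq_finrank_span_cols, hM.rank_matrix, Fintype.card_fin]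
  let s := (Finset.univ.map ⟨c, hc⟩).orderEmbOfFin hcard
  have hs (j) : ∃ i, c i = s j := by
    obtain ⟨i, -, hi⟩ := Finset.mem_map.mp (Finset.orderEmbOfFin_mem _ hcard j)
    exact ⟨i, hi⟩
  choose e he using hs
  have he_inj : Function.Injective e := fun i j hij => s.injective (by rw [← he, ← he, hij])
  refine ⟨s, s.strictMono, ?_⟩
  rw [← isUnit_iff_ne_zero, ← Matrix.isUnit_iff_isUnit_det,
    ← Matrix.linearIndependent_cols_iff_isUnit]
  have hcol : (M.submatrix id s).col = (M.col ∘ c) ∘ e :=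
    funext fun j => congrArg M.col (he j).symm
  exact hcol ▸ hli.comp e he_inj

theorem exists_vecMul_eq_zero_of_det_submatrix_eq_zero
    (hM : ∀ s : Fin r → n, StrictMono s → (M.submatrix id s).det = 0) :
    ∃ v ≠ 0, v ᵥ* M = 0 := by
  by_contra! hker
  have hinj : Function.Injective M.vecMul :=
    (injective_iff_map_eq_zero M.vecMulLinear).mpr fun v hv => by_contra fun hv₀ => hker v hv₀ hv
  obtain ⟨s, hs, hdet⟩ := exists_det_submatrix_ne_zero (Matrix.vecMul_injective_iff.mp hinj)
  exact hdet (hM s hs)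

end Minors

section MomentSequence

/-- The `n`-th moment of the inverse Gaussian distribution of mean `μ` and shape parameter `μ² / ν`,
which is a polynomial in `μ` and `ν`. -/
def invGaussMoment {A : Type*} [CommRing A] (μ ν : A) : ℕ → A
  | 0 => 1
  | 1 => μ
  | n + 2 => (2 * n + 1) * ν * invGaussMoment μ ν (n + 1) + μ ^ 2 * invGaussMoment μ ν n

theorem map_invGaussMoment {A B F : Type*} [CommRing A] [CommRing B] [FunLike F A B]
    [RingHomClass F A B] (f : F) (μ ν : A) (n : ℕ) :
    f (invGaussMoment μ ν n) = invGaussMoment (f μ) (f ν) n := by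
  induction n using Nat.twoStepInduction with
  | zero => simp [invGaussMoment]
  | one => simp [invGaussMoment]
  | more n ih₀ ih₁ => simp [invGaussMoment, ih₀, ih₁, map_ofNat f]

theorem invGaussMoment_mem {A S : Type*} [CommRing A] [SetLike S A] [SubringClass S A] {s : S}
    {μ ν : A} (hμ : μ ∈ s) (hν : ν ∈ s) (n : ℕ) : invGaussMoment μ ν n ∈ s := by
  induction n using Nat.twoStepInduction with
  | zero => exact one_mem s
  | one => exact hμ
  | more n ih₀ ih₁ =>
    have hn : (2 * n + 1 : A) ∈ s := by exact_mod_cast natCast_mem s (2 * n + 1)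
    exact add_mem (mul_mem (mul_mem hn hν) ih₁) (mul_mem (pow_mem hμ 2) ih₀)

/-- The linear relation `v` between the rows of the matrix `H` (see `invGaussMatrix`) at the point
with coordinates `a 0, …, a d`, written out column by column. The index set of `a` is
`ℕ` rather than `Fin (d + 1)` so that recurrences in the index can be stated directly. -/
structure IsInvGaussRelation {A : Type*} [CommRing A] (d : ℕ) (a : ℕ → A) (v : Fin 3 → A) :
    Prop where
  initial : 0 < d → v 0 * a 0 ^ 2 + v 2 * a 1 ^ 2 = 0
  recurrence : ∀ n, n + 1 < d →
    v 0 * a n + v 1 * ((2 * n + 1) * a (n + 1)) + v 2 * a (n + 2) = 0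

theorem isInvGaussRelation_invGaussMoment {A : Type*} [CommRing A] (d : ℕ) (t μ ν : A) :
    IsInvGaussRelation d (fun n => t * invGaussMoment μ ν n) ![μ ^ 2, ν, -1] where
  initial _ := by simp only [invGaussMoment, Matrix.cons_val]; ring
  recurrence n _ := by simp only [invGaussMoment, Matrix.cons_val]; ring

namespace IsInvGaussRelation

variable {K : Type*} [Field K] {d : ℕ} {a : ℕ → K} {v : Fin 3 → K}

theorem eq_mul_invGaussMoment (h : IsInvGaussRelation d a v) (hv : v 2 ≠ 0) {n : ℕ} (hn : n ≤ d) :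
    a n = a 0 * invGaussMoment (a 1 / a 0) (-(v 1 / v 2)) n := by
  induction n using Nat.twoStepInduction with
  | zero => simp [invGaussMoment]
  | one =>
    have h01 : a 0 = 0 → a 1 = 0 := fun h0 => by simpa [h0, hv] using h.initial (by omega)
    rw [invGaussMoment, mul_div_cancel_of_imp' h01]
  | more n ih₀ ih₁ =>
    have hμ : v 0 * a 0 = -v 2 * (a 1 / a 0) ^ 2 * a 0 := by
      rcases eq_or_ne (a 0) 0 with h0 | h0
      · simp [h0]
      · field_simp
        linear_combination h.initial (by omega)
    have hν : v 2 * -(v 1 / v 2) = -v 1 := by field_simp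
    have hrec := h.recurrence n (by omega)
    rw [ih₀ (by omega), ih₁ (by omega)] at hrec
    refine mul_left_cancel₀ hv ?_
    rw [invGaussMoment]
    linear_combination hrec - invGaussMoment (a 1 / a 0) (-(v 1 / v 2)) n * hμ -
      a 0 * (2 * n + 1) * invGaussMoment (a 1 / a 0) (-(v 1 / v 2)) (n + 1) * hν

theorem mem_of_apply_two_eq_zero {S : Type*} [SetLike S K] [SubringClass S K] {s : S}
    (h : IsInvGaussRelation d a v) (hv₀ : v 0 ≠ 0) (hv₂ : v 2 = 0) (hs : v 1 / v 0 ∈ s)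
    (hlast : a (d - 1) ∈ s) {n : ℕ} (hn : n ≤ d - 1) : a n ∈ s := by
  induction hn using Nat.decreasingInduction with
  | self => exact hlast
  | of_succ n hn ih =>
    have ha : a n = -((2 * n + 1 : ℕ) * (v 1 / v 0) * a (n + 1)) := by
      have := h.recurrence n (by omega)
      push_cast
      field_simp
      linear_combination this - a (n + 2) * hv₂
    rw [ha]
    exact neg_mem (mul_mem (mul_mem (natCast_mem s _) hs) ih)

theorem eq_zero_of_apply_zero_two_eq_zero [CharZero K] (h : IsInvGaussRelation d a v)
    (hv₀ : v 0 = 0) (hv₁ : v 1 ≠ 0) (hv₂ : v 2 = 0) {n : ℕ} (hn : n + 1 < d) : a (n + 1) = 0 := by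
  have hodd : (2 * n + 1 : K) ≠ 0 := by exact_mod_cast (2 * n).succ_ne_zero
  simpa [hv₀, hv₁, hv₂, hodd] using h.recurrence n hn

theorem exists_forall_mem_adjoin [CharZero K] (k : Type*) [CommRing k] [Algebra k K]
    (h : IsInvGaussRelation d a v) (hv : v ≠ 0) :
    ∃ g : Fin 3 → K, ∀ n ≤ d, a n ∈ Algebra.adjoin k (Set.range g) := by
  have hg (g : Fin 3 → K) (i : Fin 3) : g i ∈ Algebra.adjoin k (Set.range g) :=
    Algebra.subset_adjoin ⟨i, rfl⟩
  by_cases hv₂ : v 2 = 0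
  · by_cases hv₀ : v 0 = 0
    · have hv₁ : v 1 ≠ 0 := fun hv₁ => hv (by ext i; fin_cases i <;> assumption)
      refine ⟨![a 0, a d, 0], fun n hn => ?_⟩
      rcases n with _ | n
      · exact hg _ 0
      · rcases hn.eq_or_lt with rfl | hn
        · exact hg _ 1
        · simp [h.eq_zero_of_apply_zero_two_eq_zero hv₀ hv₁ hv₂ hn]
    · refine ⟨![v 1 / v 0, a (d - 1), a d], fun n hn => ?_⟩
      rcases hn.eq_or_lt with rfl | hn
      · exact hg _ 2
      · exact h.mem_of_apply_two_eq_zero hv₀ hv₂ (hg _ 0) (hg _ 1) (by omega)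
  · refine ⟨![a 0, a 1 / a 0, -(v 1 / v 2)], fun n hn => ?_⟩
    rw [h.eq_mul_invGaussMoment hv₂ hn]
    exact mul_mem (hg _ 0) (invGaussMoment_mem (hg _ 1) (hg _ 2) n)

end IsInvGaussRelation

end MomentSequence

section Points

open Matrix

variable {A : Type*} [CommRing A] [Algebra ℂ A] {d : ℕ}

theorem vecMul_map_invGaussMatrix_eq_zero_iff {a : ℕ → A} {v : Fin 3 → A} :
    v ᵥ* (invGaussMatrix d).map (aeval fun i : Fin (d + 1) => a i) = 0 ↔
      IsInvGaussRelation d a v := by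
  have hcol (c : Fin d) : (v ᵥ* (invGaussMatrix d).map (aeval fun i : Fin (d + 1) => a i)) c =
      if c.val = 0 then v 0 * a 0 ^ 2 + v 2 * a 1 ^ 2
      else v 0 * a (c - 1) + v 1 * ((2 * c - 1) * a c) + v 2 * a (c + 1) := by
    split_ifs with hc <;>
      simp [Matrix.vecMul, dotProduct, Fin.sum_univ_three, invGaussMatrix, hc,
        map_ofNat (algebraMap ℂ A)]
  rw [_root_.funext_iff]
  simp only [hcol, Pi.zero_apply]
  refine ⟨fun h => ⟨fun hd => h ⟨0, hd⟩, fun n hn => ?_⟩, fun h => ?_⟩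
  · have := h ⟨n + 1, hn⟩
    simp only [Nat.add_eq_zero_iff, one_ne_zero, and_false, if_false, Nat.add_sub_cancel] at this
    push_cast at this
    linear_combination this
  · rintro ⟨_ | n, hn⟩
    · exact h.initial hn
    · simp only [Nat.add_eq_zero_iff, one_ne_zero, and_false, if_false, Nat.add_sub_cancel]
      push_cast
      linear_combination h.recurrence n hn

theorem invGaussIdeal_le_ker_iff {φ : MvPolynomial (Fin (d + 1)) ℂ →ₐ[ℂ] A} :
    invGaussIdeal d ≤ RingHom.ker φ ↔
      ∀ s, StrictMono s → (((invGaussMatrix d).map φ).submatrix id s).det = 0 := by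
  have hmap (s : Fin 3 → Fin d) : φ ((invGaussMatrix d).submatrix id s).det =
      (((invGaussMatrix d).map φ).submatrix id s).det := AlgHom.map_det φ _
  rw [invGaussIdeal, Ideal.span_le]
  refine ⟨fun h s hs => hmap s ▸ h ⟨s, hs, rfl⟩, ?_⟩
  rintro h _ ⟨s, hs, rfl⟩
  exact (hmap s).trans (h s hs)

theorem IsInvGaussRelation.invGaussIdeal_le_ker [IsDomain A] {a : ℕ → A} {v : Fin 3 → A}
    (h : IsInvGaussRelation d a v) (hv : v ≠ 0) :
    invGaussIdeal d ≤ RingHom.ker (aeval (R := ℂ) fun i : Fin (d + 1) => a i) :=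
  invGaussIdeal_le_ker_iff.mpr fun s _ =>
    det_submatrix_eq_zero_of_vecMul_eq_zero hv (vecMul_map_invGaussMatrix_eq_zero_iff.mpr h) s

theorem exists_isInvGaussRelation {K : Type*} [Field K] [Algebra ℂ K] {a : ℕ → K}
    (h : invGaussIdeal d ≤ RingHom.ker (aeval (R := ℂ) fun i : Fin (d + 1) => a i)) :
    ∃ v ≠ 0, IsInvGaussRelation d a v := by
  obtain ⟨v, hv, hvM⟩ :=
    exists_vecMul_eq_zero_of_det_submatrix_eq_zero (invGaussIdeal_le_ker_iff.mp h)
  exact ⟨v, hv, vecMul_map_invGaussMatrix_eq_zero_iff.mp hvM⟩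

theorem exists_range_le_adjoin_of_quotient_invGaussIdeal {K : Type*} [Field K] [Algebra ℂ K]
    (φ : (MvPolynomial (Fin (d + 1)) ℂ ⧸ invGaussIdeal d) →ₐ[ℂ] K) :
    ∃ g : Fin 3 → K, φ.range ≤ Algebra.adjoin ℂ (Set.range g) := by
  have : CharZero K := charZero_of_injective_algebraMap (algebraMap ℂ K).injective
  let a (n : ℕ) : K := φ (Ideal.Quotient.mk _ (X (Fin.ofNat (d + 1) n)))
  have hφ : φ.comp (Ideal.Quotient.mkₐ ℂ _) = aeval fun i : Fin (d + 1) => a i := by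
    ext i
    simp [a]
  have hker : invGaussIdeal d ≤ RingHom.ker (aeval (R := ℂ) fun i : Fin (d + 1) => a i) := by
    intro p hp
    rw [← hφ, RingHom.mem_ker, AlgHom.comp_apply, Ideal.Quotient.mkₐ_eq_mk,
      Ideal.Quotient.eq_zero_iff_mem.mpr hp, map_zero]
  obtain ⟨v, hv, hrel⟩ := exists_isInvGaussRelation hker
  obtain ⟨g, hg⟩ := hrel.exists_forall_mem_adjoin ℂ hv
  have hrange : φ.range = Algebra.adjoin ℂ (Set.range fun i : Fin (d + 1) => a i) := by
    rw [Algebra.adjoin_range_eq_range_aeval, ← hφ, AlgHom.range_comp,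
      (AlgHom.range_eq_top _).mpr (Ideal.Quotient.mkₐ_surjective ℂ _), Algebra.map_top]
  refine ⟨g, ?_⟩
  rw [hrange, Algebra.adjoin_le_iff]
  rintro _ ⟨i, rfl⟩
  exact hg i (Nat.lt_succ_iff.mp i.isLt)

theorem ringKrullDim_quotient_invGaussIdeal_le (d : ℕ) :
    ringKrullDim (MvPolynomial (Fin (d + 1)) ℂ ⧸ invGaussIdeal d) ≤ 3 := by
  simpa using ringKrullDim_le_of_forall_range_le_adjoin (k := ℂ) (Fin 3) fun _ _ _ φ =>
    exists_range_le_adjoin_of_quotient_invGaussIdeal (d := d) φ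

variable [IsDomain A]

/-- The `A`-valued point `mₙ = t * invGaussMoment μ ν n` of the variety of `I₃(H)`, as an algebra
homomorphism out of the coordinate ring. For `A` a polynomial ring in `t, μ, ν` this is the generic
point of the component parametrised by inverse Gaussian moments. -/
noncomputable def invGaussPoint (d : ℕ) (t μ ν : A) :
    (MvPolynomial (Fin (d + 1)) ℂ ⧸ invGaussIdeal d) →ₐ[ℂ] A :=
  Ideal.Quotient.liftₐ _ (aeval fun i : Fin (d + 1) => t * invGaussMoment μ ν i)
    ((isInvGaussRelation_invGaussMoment d t μ ν).invGaussIdeal_le_ker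
      fun h => by simpa using congrFun h 2)

@[simp]
theorem invGaussPoint_mk_X (t μ ν : A) (i : Fin (d + 1)) :
    invGaussPoint d t μ ν (Ideal.Quotient.mk _ (X i)) = t * invGaussMoment μ ν i :=
  aeval_X _ i

theorem comp_invGaussPoint {B : Type*} [CommRing B] [IsDomain B] [Algebra ℂ B] (ψ : A →ₐ[ℂ] B)
    (t μ ν : A) : ψ.comp (invGaussPoint d t μ ν) = invGaussPoint d (ψ t) (ψ μ) (ψ ν) := by
  refine Ideal.Quotient.algHom_ext ℂ (MvPolynomial.algHom_ext fun i => ?_)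
  simp [map_invGaussMoment]

/-- The prime ideal of functions vanishing at `invGaussPoint d t μ ν`. -/
noncomputable def invGaussPrime (d : ℕ) (t μ ν : A) :
    PrimeSpectrum (MvPolynomial (Fin (d + 1)) ℂ ⧸ invGaussIdeal d) :=
  ⟨RingHom.ker (invGaussPoint d t μ ν), RingHom.ker_isPrime _⟩

theorem invGaussPrime_lt_of_specialization {B : Type*} [CommRing B] [IsDomain B] [Algebra ℂ B]
    (ψ : A →ₐ[ℂ] B) {t μ ν : A} {t' μ' ν' : B} (ht : ψ t = t') (hμ : ψ μ = μ') (hν : ψ ν = ν')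
    {p : MvPolynomial (Fin (d + 1)) ℂ ⧸ invGaussIdeal d}
    (hp : invGaussPoint d t μ ν p ≠ 0) (hp' : invGaussPoint d t' μ' ν' p = 0) :
    invGaussPrime d t μ ν < invGaussPrime d t' μ' ν' := by
  subst ht hμ hν
  rw [← PrimeSpectrum.asIdeal_lt_asIdeal]
  refine SetLike.lt_iff_le_and_exists.mpr
    ⟨fun q (hq : invGaussPoint d t μ ν q = 0) => ?_, p, hp', hp⟩
  change invGaussPoint d (ψ t) (ψ μ) (ψ ν) q = 0
  rw [← comp_invGaussPoint, AlgHom.comp_apply, hq, map_zero]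

theorem three_le_ringKrullDim_quotient_invGaussIdeal (hd : 2 ≤ d) :
    3 ≤ ringKrullDim (MvPolynomial (Fin (d + 1)) ℂ ⧸ invGaussIdeal d) := by
  let P := invGaussPrime (A := MvPolynomial (Fin 3) ℂ) d
  let m (i : ℕ) (hi : i < d + 1) : MvPolynomial (Fin (d + 1)) ℂ ⧸ invGaussIdeal d :=
    Ideal.Quotient.mk _ (X ⟨i, hi⟩)
  have hminor (t μ ν : MvPolynomial (Fin 3) ℂ) : invGaussPoint d t μ ν
      (m 0 (by omega) * m 2 (by omega) - m 1 (by omega) ^ 2) = t ^ 2 * ν * μ := by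
    simp only [m, map_sub, map_mul, map_pow, invGaussPoint_mk_X, invGaussMoment]
    ring
  have hν : P (X 0) (X 1) (X 2) < P (X 0) (X 1) 0 :=
    invGaussPrime_lt_of_specialization (aeval ![X 0, X 1, 0]) (by simp) (by simp) (by simp)
      (by rw [hminor]; simp) (by rw [hminor]; simp)
  have hμ : P (X 0) (X 1) 0 < P (X 0) 0 0 :=
    invGaussPrime_lt_of_specialization (aeval ![X 0, 0, 0]) (by simp) (by simp) (map_zero _)
      (p := m 1 (by omega)) (by simp [m, invGaussMoment]) (by simp [m, invGaussMoment])
  have ht : P (X 0) 0 0 < P 0 0 0 :=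
    invGaussPrime_lt_of_specialization (aeval ![0, 0, 0]) (by simp) (map_zero _) (map_zero _)
      (p := m 0 (by omega)) (by simp [m, invGaussMoment]) (by simp [m])
  let chain : LTSeries (PrimeSpectrum (MvPolynomial (Fin (d + 1)) ℂ ⧸ invGaussIdeal d)) :=
    ⟨3, ![P (X 0) (X 1) (X 2), P (X 0) (X 1) 0, P (X 0) 0 0, P 0 0 0], fun i => by
      fin_cases i
      exacts [hν, hμ, ht]⟩
  exact Order.LTSeries.length_le_krullDim chain

end Points

/-- For `d ≥ 3`, the quotient ring `ℂ[m₀,…,m_d]/I₃(H)` has Krull dimension `3`. -/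
theorem invGauss_krullDim (d : ℕ) (hd : 3 ≤ d) :
    ringKrullDim (MvPolynomial (Fin (d + 1)) ℂ ⧸ invGaussIdeal d) = 3 :=
  (ringKrullDim_quotient_invGaussIdeal_le d).antisymm
    (three_le_ringKrullDim_quotient_invGaussIdeal (by omega))
end

section
/- Let d ≥ 3 and let I = I_3(H) ⊆ S = ℂ[m_0,…,m_d]. For every natural number n, the dimension over ℂ of the n-th graded piece of S/I equals C(n+2,2) + (d−2)·C(n+1,2) + C(d−1,2)·C(n,2) + C(d−1,2)·C(n−1,2), where C(a,b) denotes the binomial coefficient (with C(a,b) = 0 when a < b). Equivalently, the Hilbert series of S/I is (1 + (d−2)t + C(d−1,2)t² + C(d−1,2)t³)/(1−t)³; in particular S/I has degree (d−1)². -/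
open MvPolynomial

/-!
The entries of the matrix are terms, and a weight strictly concave in the index of the variable
singles out the antidiagonal term of every maximal minor. Expanding a matrix with a repeated row
gives linear relations among the minors. Whenever the leading monomial of a multiple of one minor is
divisible by that of an earlier minor, one of these relations rewrites the multiple through smaller
ones, because consecutive antidiagonal entries share no variable. This is Buchberger's criterion, so
the initial ideal is generated by the antidiagonal monomials `m_a m_b m_c` with
`2 ≤ a ≤ b ≤ c ≤ d - 2` and `m_1² m_b m_c` with `1 ≤ b ≤ c ≤ d - 2`. The standard monomials are
therefore those of degree at most `2` in `m_1, …, m_{d-2}`, together with those of degree `3`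
divisible by `m_1`; the remaining variables `m_0, m_{d-1}, m_d` are free.
-/

section QuotientByComplement

variable {R M : Type*} [Ring R] [AddCommGroup M] [Module R M]

theorem finrank_quotient_comap_subtype_eq_of_disjoint {I T V : Submodule R M} (hTV : T ≤ V)
    (hdisj : Disjoint T I) (hsup : V ≤ I ⊔ T) :
    Module.finrank R (V ⧸ I.comap V.subtype) = Module.finrank R T := by
  have hcompl : IsCompl (I.comap V.subtype) (T.comap V.subtype) := by
    refine ⟨?_, ?_⟩
    · rw [Submodule.disjoint_def]
      intro x hI hT
      exact Subtype.ext (Submodule.disjoint_def.mp hdisj x hT hI)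
    · rw [codisjoint_iff, eq_top_iff]
      rintro ⟨x, hx⟩ -
      obtain ⟨y, hy, z, hz, rfl⟩ := Submodule.mem_sup.mp (hsup hx)
      have hyV : y ∈ V := by simpa using V.sub_mem hx (hTV hz)
      exact Submodule.mem_sup.mpr ⟨⟨y, hyV⟩, hy, ⟨z, hTV hz⟩, hz, rfl⟩
  rw [(Submodule.quotientEquivOfIsCompl _ _ hcompl).finrank_eq,
    (Submodule.comapSubtypeEquivOfLe hTV).finrank_eq]

end QuotientByComplement

section GroebnerCriterion

variable {σ ι κ K : Type*} [Field K]

/-- `u` is the leading exponent of `p` for the comparison by weight `w` within a fixed degree: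
every other monomial of `p` has the same degree and smaller weight.  Two monomials of equal
weight are not compared, so `w` need not come from a monomial order. -/
structure IsLeadingExponent (w : (σ →₀ ℕ) →+ ℕ) (p : MvPolynomial σ K) (u : σ →₀ ℕ) : Prop where
  coeff_ne_zero : coeff u p ≠ 0
  degree_eq : ∀ v ∈ p.support, v.degree = u.degree
  weight_lt : ∀ v ∈ p.support, v ≠ u → w v < w u

theorem isLeadingExponent_sum_monomial [Fintype κ] {w : (σ →₀ ℕ) →+ ℕ} {E : κ → σ →₀ ℕ}
    {c : κ → K} {k : κ} (hc : c k ≠ 0) (hdeg : ∀ j, (E j).degree = (E k).degree)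
    (hw : ∀ j, j ≠ k → w (E j) < w (E k)) :
    IsLeadingExponent w (∑ j, monomial (E j) (c j)) (E k) := by
  classical
  have hsupp : ∀ v ∈ (∑ j, monomial (E j) (c j)).support, ∃ j, E j = v := by
    intro v hv
    obtain ⟨j, -, hj⟩ := Finset.mem_biUnion.mp (support_sum hv)
    exact ⟨j, (Finset.mem_singleton.mp (support_monomial_subset hj)).symm⟩
  refine ⟨?_, fun v hv => ?_, fun v hv hne => ?_⟩
  · rw [coeff_sum, Finset.sum_eq_single k (fun j _ hj => ?_) (by simp), coeff_monomial, if_pos rfl]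
    · exact hc
    · rw [coeff_monomial, if_neg fun h => (hw j hj).ne (congrArg w h)]
  · obtain ⟨j, rfl⟩ := hsupp v hv
    exact hdeg j
  · obtain ⟨j, rfl⟩ := hsupp v hv
    exact hw j fun h => hne (congrArg E h)

theorem IsLeadingExponent.monomial_mul {w : (σ →₀ ℕ) →+ ℕ} {p : MvPolynomial σ K} {u : σ →₀ ℕ}
    (h : IsLeadingExponent w p u) (v : σ →₀ ℕ) :
    IsLeadingExponent w (monomial v 1 * p) (v + u) := by
  classical
  have hsupp : ∀ m ∈ (monomial v 1 * p).support, ∃ m' ∈ p.support, v + m' = m := by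
    intro m hm
    rw [mem_support_iff, coeff_monomial_mul'] at hm
    obtain ⟨hle, hne⟩ := ite_ne_right_iff.mp hm
    exact ⟨m - v, mem_support_iff.mpr (by simpa using hne), add_tsub_cancel_of_le hle⟩
  refine ⟨by simpa using h.coeff_ne_zero, fun m hm => ?_, fun m hm hne => ?_⟩
  · obtain ⟨m', hm', rfl⟩ := hsupp m hm
    rw [map_add, map_add, h.degree_eq m' hm']
  · obtain ⟨m', hm', rfl⟩ := hsupp m hm
    rw [map_add, map_add]
    exact Nat.add_lt_add_left (h.weight_lt m' hm' fun h => hne (h ▸ rfl)) _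

/-- The multiple `x ^ v * g i` of the generator `g i` encoded by the pair `P = (v, i)`. -/
noncomputable def monomialMultiple (g : ι → MvPolynomial σ K) (P : (σ →₀ ℕ) × ι) :
    MvPolynomial σ K :=
  monomial P.1 1 * g P.2

/-- The leading exponent of `monomialMultiple g P` when `ℓ i` is the leading exponent of `g i`. -/
noncomputable def multipleExponent (ℓ : ι → σ →₀ ℕ) (P : (σ →₀ ℕ) × ι) : σ →₀ ℕ :=
  P.1 + ℓ P.2

/-- The rank of `P` in the rewriting process: first the weight of its leading exponent, then
the index of its generator. -/
noncomputable def multipleRank (w : (σ →₀ ℕ) →+ ℕ) (ℓ : ι → σ →₀ ℕ) (P : (σ →₀ ℕ) × ι) : ℕ ×ₗ ι :=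
  toLex (w (multipleExponent ℓ P), P.2)

/-- The multiple `P` uses the first generator whose leading monomial divides its own. -/
def IsReducedMultiple [LT ι] (ℓ : ι → σ →₀ ℕ) (P : (σ →₀ ℕ) × ι) : Prop :=
  ∀ j < P.2, ¬ ℓ j ≤ multipleExponent ℓ P

/-- Standard exponents: those of the monomials outside the monomial ideal generated by the
`x ^ ℓ i`. -/
def IsStandard (ℓ : ι → σ →₀ ℕ) (u : σ →₀ ℕ) : Prop :=
  ∀ i, ¬ ℓ i ≤ u

/-- A form of Buchberger's criterion: every monomial multiple of a generator that is not reduced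
is a linear combination of multiples of smaller rank. -/
structure IsRewritingFamily [LinearOrder ι] (w : (σ →₀ ℕ) →+ ℕ) (ℓ : ι → σ →₀ ℕ)
    (g : ι → MvPolynomial σ K) : Prop where
  leading : ∀ i, IsLeadingExponent w (g i) (ℓ i)
  rewrite : ∀ P, ¬ IsReducedMultiple ℓ P → monomialMultiple g P ∈
    Submodule.span K (monomialMultiple g '' {Q | multipleRank w ℓ Q < multipleRank w ℓ P})

open scoped Pointwise in
theorem restrictScalars_ideal_span_range (g : ι → MvPolynomial σ K) :
    (Ideal.span (Set.range g)).restrictScalars K =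
      Submodule.span K (Set.range (monomialMultiple g)) := by
  have hsmul : Set.range (monomialMultiple g) =
      Set.range (fun v => (monomial v 1 : MvPolynomial σ K)) • Set.range g := by
    rw [← Set.image2_smul, Set.image2_range]
    rfl
  rw [hsmul, Submodule.span_smul_of_span_eq_top (by simpa using (basisMonomials σ K).span_eq)]

theorem multipleExponent_injOn_reduced [LinearOrder ι] (ℓ : ι → σ →₀ ℕ) :
    Set.InjOn (multipleExponent ℓ) {P | IsReducedMultiple ℓ P} := by
  rintro ⟨v, i⟩ hP ⟨v', i'⟩ hP' (h : v + ℓ i = v' + ℓ i')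
  have hi : ¬ i < i' := fun hlt => hP' i hlt (le_add_self.trans_eq h)
  have hi' : ¬ i' < i := fun hlt => hP i' hlt (le_add_self.trans_eq h.symm)
  obtain rfl : i = i' := le_antisymm (not_lt.mp hi') (not_lt.mp hi)
  rw [add_right_cancel h]

theorem exists_isReducedMultiple [LinearOrder ι] [WellFoundedLT ι] {ℓ : ι → σ →₀ ℕ} {u : σ →₀ ℕ}
    (hu : ¬ IsStandard ℓ u) : ∃ P, IsReducedMultiple ℓ P ∧ multipleExponent ℓ P = u := by
  simp only [IsStandard, not_forall, not_not] at hu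
  obtain ⟨i, hi, hmin⟩ := WellFounded.has_min wellFounded_lt {i | ℓ i ≤ u} hu
  have hexp : multipleExponent ℓ (u - ℓ i, i) = u := tsub_add_cancel_of_le hi
  exact ⟨(u - ℓ i, i), fun j hj hle => hmin j (hexp ▸ hle) hj, hexp⟩

theorem not_isStandard_multipleExponent (ℓ : ι → σ →₀ ℕ) (P : (σ →₀ ℕ) × ι) :
    ¬ IsStandard ℓ (multipleExponent ℓ P) :=
  fun h => h P.2 le_add_self

namespace IsRewritingFamily

variable [LinearOrder ι] {w : (σ →₀ ℕ) →+ ℕ} {ℓ : ι → σ →₀ ℕ} {g : ι → MvPolynomial σ K}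

theorem isLeadingExponent_multiple (h : IsRewritingFamily w ℓ g) (P : (σ →₀ ℕ) × ι) :
    IsLeadingExponent w (monomialMultiple g P) (multipleExponent ℓ P) :=
  (h.leading P.2).monomial_mul P.1

theorem ideal_eq_span_reduced [WellFoundedLT ι] (h : IsRewritingFamily w ℓ g) :
    (Ideal.span (Set.range g)).restrictScalars K =
      Submodule.span K (monomialMultiple g '' {P | IsReducedMultiple ℓ P}) := by
  rw [restrictScalars_ideal_span_range]
  refine le_antisymm (Submodule.span_le.mpr ?_) (Submodule.span_mono (Set.image_subset_range _ _))
  rintro _ ⟨P, rfl⟩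
  induction P using (InvImage.wf (multipleRank w ℓ) wellFounded_lt).induction with
  | _ P ih =>
    by_cases hP : IsReducedMultiple ℓ P
    · exact Submodule.subset_span (Set.mem_image_of_mem _ hP)
    · refine Submodule.span_le.mpr ?_ (h.rewrite P hP)
      rintro _ ⟨Q, hQ, rfl⟩
      exact ih Q hQ

theorem exists_mem_support_not_isStandard [WellFoundedLT ι] (h : IsRewritingFamily w ℓ g)
    {p : MvPolynomial σ K} (hp : p ∈ Ideal.span (Set.range g)) (hp0 : p ≠ 0) :
    ∃ u ∈ p.support, ¬ IsStandard ℓ u := by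
  replace hp : p ∈ (Ideal.span (Set.range g)).restrictScalars K := hp
  rw [h.ideal_eq_span_reduced, Finsupp.mem_span_image_iff_linearCombination] at hp
  obtain ⟨c, hc, rfl⟩ := hp
  have hc0 : c.support.Nonempty := by
    rw [Finsupp.support_nonempty_iff]
    rintro rfl
    exact hp0 (map_zero _)
  obtain ⟨P, hP, hmax⟩ := Finset.exists_max_image c.support (fun P => w (multipleExponent ℓ P)) hc0
  refine ⟨multipleExponent ℓ P, ?_, not_isStandard_multipleExponent ℓ P⟩
  have hother : ∀ Q ∈ c.support, Q ≠ P →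
      coeff (multipleExponent ℓ P) (c Q • monomialMultiple g Q) = 0 := by
    intro Q hQ hne
    rw [coeff_smul, smul_eq_zero]
    refine Or.inr (by_contra fun hcoeff => ?_)
    refine (hmax Q hQ).not_gt ((h.isLeadingExponent_multiple Q).weight_lt _
      (mem_support_iff.mpr hcoeff) fun heq => hne ?_)
    exact multipleExponent_injOn_reduced ℓ (hc hQ) (hc hP) heq.symm
  rw [mem_support_iff, Finsupp.linearCombination_apply, Finsupp.sum, coeff_sum,
    Finset.sum_eq_single_of_mem P hP hother, coeff_smul, smul_eq_mul]
  exact mul_ne_zero (Finsupp.mem_support_iff.mp hP)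
    (h.isLeadingExponent_multiple P).coeff_ne_zero

theorem monomial_mem_sup_restrictSupport [WellFoundedLT ι] (h : IsRewritingFamily w ℓ g)
    (u : σ →₀ ℕ) : monomial u 1 ∈ (Ideal.span (Set.range g)).restrictScalars K ⊔
      restrictSupport K {v | v.degree = u.degree ∧ IsStandard ℓ v} := by
  classical
  set N := fun n => (Ideal.span (Set.range g)).restrictScalars K ⊔
    restrictSupport K {v | v.degree = n ∧ IsStandard ℓ v}
  change monomial u 1 ∈ N u.degree
  induction u using (InvImage.wf w wellFounded_lt).induction with
  | _ u ih =>
  by_cases hu : IsStandard ℓ u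
  · exact Submodule.mem_sup_right ((monomial_mem_restrictSupport K).mpr (Or.inl ⟨rfl, hu⟩))
  obtain ⟨P, -, rfl⟩ := exists_isReducedMultiple hu
  set p := monomialMultiple g P
  set u := multipleExponent ℓ P
  have hlead : IsLeadingExponent w p u := h.isLeadingExponent_multiple P
  have hpN : p ∈ N u.degree := Submodule.mem_sup_left
    (Ideal.mul_mem_left _ _ (Ideal.subset_span (Set.mem_range_self P.2)))
  have hrest : ∑ v ∈ p.support.erase u, monomial v (coeff v p) ∈ N u.degree := by
    refine sum_mem fun v hv => ?_
    obtain ⟨hne, hv⟩ := Finset.mem_erase.mp hv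
    rw [← mul_one (coeff v p), ← smul_eq_mul, ← smul_monomial, ← hlead.degree_eq v hv]
    exact Submodule.smul_mem _ _ (ih v (hlead.weight_lt v hv hne))
  have hsplit : coeff u p • monomial u 1 + ∑ v ∈ p.support.erase u, monomial v (coeff v p) = p := by
    rw [smul_monomial, smul_eq_mul, mul_one, Finset.add_sum_erase _
      (fun v => monomial v (coeff v p)) (mem_support_iff.mpr hlead.coeff_ne_zero), ← as_sum]
  rw [← Submodule.smul_mem_iff _ hlead.coeff_ne_zero, eq_sub_of_add_eq hsplit]
  exact Submodule.sub_mem _ hpN hrest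

theorem finrank_homogeneousSubmodule_quotient [WellFoundedLT ι] (h : IsRewritingFamily w ℓ g)
    (n : ℕ) :
    Module.finrank K (homogeneousSubmodule σ K n ⧸
      ((Ideal.span (Set.range g)).restrictScalars K).comap
        (homogeneousSubmodule σ K n).subtype) =
      {u : σ →₀ ℕ | u.degree = n ∧ IsStandard ℓ u}.ncard := by
  have hhom : homogeneousSubmodule σ K n = restrictSupport K {u : σ →₀ ℕ | u.degree = n} :=
    homogeneousSubmodule_eq_finsupp_supported σ K n
  rw [finrank_quotient_comap_subtype_eq_of_disjoint
    (T := restrictSupport K {u | u.degree = n ∧ IsStandard ℓ u}),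
    Module.finrank_eq_nat_card_basis (basisRestrictSupport K _), Nat.card_coe_set_eq]
  · exact hhom ▸ restrictSupport_mono K fun u hu => hu.1
  · rw [Submodule.disjoint_def]
    intro p hstd hp
    by_contra hp0
    obtain ⟨u, hu, hnot⟩ := h.exists_mem_support_not_isStandard hp hp0
    exact hnot ((mem_restrictSupport_iff K).mp hstd hu).2
  · rw [hhom, restrictSupport_eq_span, Submodule.span_le]
    rintro _ ⟨u, rfl, rfl⟩
    exact h.monomial_mem_sup_restrictSupport u

end IsRewritingFamily

end GroebnerCriterion

section Monge

variable {R C M : Type*} [LinearOrder R] [Preorder C]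
  [AddCommMonoid M] [LinearOrder M] [IsOrderedCancelAddMonoid M]

/-- A strict Monge array: in every `2 × 2` subarray the antidiagonal outweighs the diagonal. -/
def IsStrictMonge (W : R → C → M) : Prop :=
  ∀ ⦃r r'⦄, r < r' → ∀ ⦃c c'⦄, c < c' → W r c + W r' c' < W r c' + W r' c

namespace IsStrictMonge

variable {W : R → C → M} {m : ℕ}

theorem sum_lt_sum_swap (hW : IsStrictMonge W) {p : Fin m → C} (hp : StrictMono p)
    {f : Fin m → R} {i j : Fin m} (hij : i < j) (hf : f i < f j) :
    ∑ x, W (f x) (p x) < ∑ x, W (f (Equiv.swap i j x)) (p x) := by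
  rw [← Finset.sum_add_sum_compl {i, j} fun x => W (f x) (p x),
    ← Finset.sum_add_sum_compl {i, j} fun x => W (f (Equiv.swap i j x)) (p x),
    Finset.sum_pair hij.ne, Finset.sum_pair hij.ne, Equiv.swap_apply_left, Equiv.swap_apply_right]
  refine add_lt_add_of_lt_of_le ((hW hf (hp hij)).trans_eq (add_comm _ _))
    (Finset.sum_le_sum fun x hx => ?_)
  simp only [Finset.mem_compl, Finset.mem_insert, Finset.mem_singleton, not_or] at hx
  rw [Equiv.swap_apply_of_ne_of_ne hx.1 hx.2]

theorem sum_comp_perm_lt (hW : IsStrictMonge W) {p : Fin m → C} (hp : StrictMono p)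
    {f : Fin m → R} (hf : Antitone f) {π : Equiv.Perm (Fin m)} (hπ : f ∘ π ≠ f) :
    ∑ x, W (f (π x)) (p x) < ∑ x, W (f x) (p x) := by
  obtain ⟨τ, -, hτ⟩ := Finset.exists_max_image Finset.univ
    (fun τ : Equiv.Perm (Fin m) => ∑ x, W (f (τ x)) (p x)) Finset.univ_nonempty
  have eq_of_maximal : ∀ ρ : Equiv.Perm (Fin m),
      (∑ x, W (f (τ x)) (p x) ≤ ∑ x, W (f (ρ x)) (p x)) → f ∘ ρ = f := by
    intro ρ hρ
    have hanti : Antitone (f ∘ ρ) := fun i j hij => by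
      by_contra! hlt
      have hij : i < j := hij.lt_of_ne (by rintro rfl; exact hlt.false)
      exact ((hτ (ρ * Equiv.swap i j) (Finset.mem_univ _)).trans hρ).not_gt
        (hW.sum_lt_sum_swap hp hij hlt)
    exact Tuple.unique_antitone (τ := 1) hanti hf
  have hτf := eq_of_maximal τ le_rfl
  calc ∑ x, W (f (π x)) (p x) < ∑ x, W (f (τ x)) (p x) :=
        not_le.mp fun h => hπ (eq_of_maximal π h)
    _ = ∑ x, W (f x) (p x) :=
        Finset.sum_congr rfl fun x _ => congrArg (W · (p x)) (congrFun hτf x)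

end IsStrictMonge

end Monge

section LaplaceRelation

theorem sum_mul_det_submatrix_succAbove_eq_zero {R κ : Type*} [CommRing R] {k : ℕ}
    (A : Matrix (Fin k) κ R) (r : Fin k) (p : Fin (k + 1) → κ) :
    ∑ j : Fin (k + 1), (-1) ^ (j : ℕ) * A r (p j) * (A.submatrix id (p ∘ j.succAbove)).det = 0 := by
  set B : Matrix (Fin (k + 1)) (Fin (k + 1)) R :=
    Matrix.of (Fin.cons (A r ∘ p) fun i => A i ∘ p)
  have hdet : B.det = 0 := Matrix.det_zero_of_row_eq (Fin.succ_ne_zero r).symm rfl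
  rw [Matrix.det_succ_row_zero] at hdet
  exact hdet

theorem toLex_comp_succAbove_lt {κ : Type*} [LinearOrder κ] {k : ℕ} {p : Fin (k + 1) → κ}
    (hp : StrictMono p) {i j : Fin (k + 1)} (hij : i < j) :
    toLex (p ∘ j.succAbove) < toLex (p ∘ i.succAbove) := by
  obtain ⟨t, rfl⟩ := Fin.exists_castSucc_eq.mpr (Fin.ne_last_of_lt hij)
  refine ⟨t, fun a ha => ?_, ?_⟩
  · simp only [Pi.toLex_apply, Function.comp_apply]
    rw [Fin.succAbove_of_castSucc_lt _ _ (Fin.castSucc_lt_castSucc_iff.mpr ha),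
      Fin.succAbove_of_castSucc_lt _ _ ((Fin.castSucc_lt_castSucc_iff.mpr ha).trans hij)]
  · simp only [Pi.toLex_apply, Function.comp_apply]
    rw [Fin.succAbove_castSucc_self, Fin.succAbove_of_castSucc_lt _ _ hij]
    exact hp Fin.castSucc_lt_succ

theorem strictMono_insertNth_castSucc {κ : Type*} [LinearOrder κ] {k : ℕ} {s s' : Fin k → κ}
    (hs : StrictMono s) (hs' : StrictMono s') {t : Fin k} (hagree : ∀ j < t, s' j = s j)
    (ht : s' t < s t) : StrictMono (t.castSucc.insertNth (α := fun _ => κ) (s' t) s) := by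
  obtain _ | k := k
  · exact t.elim0
  obtain rfl | ⟨i, rfl⟩ := t.eq_zero_or_eq_succ
  · exact Fin.strictMono_insertNth_zero hs _ ht
  · rw [← Fin.succ_castSucc]
    refine Fin.strictMono_insertNth hs i _ ?_ ht
    rw [← hagree _ Fin.castSucc_lt_succ]
    exact hs' Fin.castSucc_lt_succ

end LaplaceRelation

section MaximalMinors

variable {σ κ K : Type*} [Field K] {k : ℕ}

/-- The `k × κ` matrix whose `(r, c)` entry is the term `α r c * x ^ e r c`. -/
noncomputable def termMatrix (α : Fin k → κ → K) (e : Fin k → κ → σ →₀ ℕ) :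
    Matrix (Fin k) κ (MvPolynomial σ K) :=
  Matrix.of fun r c => monomial (e r c) (α r c)

variable [LinearOrder κ]

/-- The `k`-element sets of columns, as strictly increasing tuples in lexicographic order. -/
abbrev ColumnTuple (k : ℕ) (κ : Type*) [LinearOrder κ] : Type _ :=
  {s : Lex (Fin k → κ) // StrictMono (ofLex s)}

/-- The maximal minor of `termMatrix α e` on the columns `s`. -/
noncomputable def termMinor (α : Fin k → κ → K) (e : Fin k → κ → σ →₀ ℕ) (s : ColumnTuple k κ) :
    MvPolynomial σ K :=
  ((termMatrix α e).submatrix id (ofLex s.1)).det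

/-- The exponent of the product of the antidiagonal entries of the columns `s`. -/
noncomputable def antidiagonalExponent (e : Fin k → κ → σ →₀ ℕ) (s : ColumnTuple k κ) : σ →₀ ℕ :=
  ∑ i, e i.rev (ofLex s.1 i)

variable {α : Fin k → κ → K} {e : Fin k → κ → σ →₀ ℕ} {w : (σ →₀ ℕ) →+ ℕ}

theorem termMinor_eq_sum_monomial (s : ColumnTuple k κ) :
    termMinor α e s = ∑ π : Equiv.Perm (Fin k), monomial (∑ i, e (π i) (ofLex s.1 i))
      ((Equiv.Perm.sign π : K) * ∏ i, α (π i) (ofLex s.1 i)) := by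
  rw [termMinor, Matrix.det_apply']
  refine Finset.sum_congr rfl fun π _ => ?_
  simp only [← C_mul_monomial, monomial_sum_prod, map_intCast, termMatrix,
    Matrix.submatrix_apply, Matrix.of_apply, id_eq]

theorem isLeadingExponent_termMinor (hdeg : ∀ r r' c, (e r c).degree = (e r' c).degree)
    (hW : IsStrictMonge fun r c => w (e r c))
    (hα : ∀ s : Fin k → κ, StrictMono s → ∀ t, α t.rev (s t) ≠ 0) (s : ColumnTuple k κ) :
    IsLeadingExponent w (termMinor α e s) (antidiagonalExponent e s) := by
  rw [termMinor_eq_sum_monomial]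
  refine isLeadingExponent_sum_monomial (k := Fin.revPerm)
    (E := fun π => ∑ i, e (π i) (ofLex s.1 i))
    (c := fun π => (Equiv.Perm.sign π : K) * ∏ i, α (π i) (ofLex s.1 i))
    ?_ (fun π => ?_) fun π hπ => ?_
  · exact mul_ne_zero ((Equiv.Perm.sign _).isUnit.map (Int.castRingHom K)).ne_zero
      (Finset.prod_ne_zero_iff.mpr fun i _ => by simpa using hα (ofLex s.1) s.2 i)
  · simp only [map_sum]
    exact Finset.sum_congr rfl fun i _ => hdeg _ _ _
  · have hne : Fin.rev ∘ (π.trans Fin.revPerm) ≠ Fin.rev := fun h =>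
      hπ (Equiv.ext fun i => by simpa using congrFun h i)
    simpa using hW.sum_comp_perm_lt s.2 Fin.rev_anti hne

/-- The `j`-th multiple, up to its coefficient, in `x ^ v` times the Laplace relation among the
maximal minors on the columns `p` obtained by repeating the row `t.rev`. -/
noncomputable def laplaceMultiple (e : Fin k → κ → σ →₀ ℕ) {p : Fin (k + 1) → κ}
    (hp : StrictMono p) (t : Fin k) (v : σ →₀ ℕ) (j : Fin (k + 1)) :
    (σ →₀ ℕ) × ColumnTuple k κ :=
  (v + e t.rev (p j), ⟨toLex (p ∘ j.succAbove), hp.comp (Fin.strictMono_succAbove j)⟩)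

theorem sum_smul_laplaceMultiple {p : Fin (k + 1) → κ} (hp : StrictMono p) (t : Fin k)
    (v : σ →₀ ℕ) :
    ∑ j : Fin (k + 1), ((-1) ^ (j : ℕ) * α t.rev (p j)) •
      monomialMultiple (termMinor α e) (laplaceMultiple e hp t v j) = 0 := by
  have h := sum_mul_det_submatrix_succAbove_eq_zero (termMatrix α e) t.rev p
  rw [← mul_zero (monomial v (1 : K)), ← h, Finset.mul_sum]
  refine Finset.sum_congr rfl fun j _ => ?_
  have hmono : C (α t.rev (p j)) * monomial (v + e t.rev (p j)) (1 : K) =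
      monomial v 1 * termMatrix α e t.rev (p j) := by
    rw [termMatrix, Matrix.of_apply, monomial_mul, C_mul_monomial, mul_one, one_mul]
  simp only [monomialMultiple, laplaceMultiple, termMinor, ofLex_toLex, smul_eq_C_mul, map_mul,
    map_pow, map_neg, map_one]
  linear_combination
    (-1) ^ (j : ℕ) * ((termMatrix α e).submatrix id (p ∘ j.succAbove)).det * hmono

/-- In the `j`-th term of the Laplace relation, column `p j` is paired with the repeated row and
the others with the antidiagonal of their minor. -/
def laplaceRow (t : Fin k) (j : Fin (k + 1)) : Fin (k + 1) → Fin k :=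
  j.insertNth (α := fun _ => Fin k) t.rev Fin.rev

theorem laplaceRow_castSucc (t : Fin k) :
    laplaceRow t t.castSucc = fun i => (t.predAbove i).rev := by
  refine funext fun i => t.castSucc.succAboveCases ?_ (fun i => ?_) i <;> simp [laplaceRow]

theorem exists_perm_laplaceRow_eq (t : Fin k) (i j : Fin (k + 1)) :
    ∃ π : Equiv.Perm (Fin (k + 1)), laplaceRow t i ∘ π = laplaceRow t j := by
  refine ⟨(finSuccEquiv' j).trans (finSuccEquiv' i).symm, funext fun a => ?_⟩
  refine j.succAboveCases ?_ (fun a => ?_) a <;> simp [laplaceRow]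

theorem multipleExponent_laplaceMultiple {p : Fin (k + 1) → κ} (hp : StrictMono p) (t : Fin k)
    (v : σ →₀ ℕ) (j : Fin (k + 1)) :
    multipleExponent (antidiagonalExponent e) (laplaceMultiple e hp t v j) =
      v + ∑ i, e (laplaceRow t j i) (p i) := by
  simp [multipleExponent, laplaceMultiple, antidiagonalExponent, laplaceRow,
    Fin.sum_univ_succAbove _ j, add_assoc]

theorem castSucc_lt_of_laplaceRow_eq {t : Fin k} {j : Fin (k + 1)}
    (hj : j ≠ t.castSucc) (h : laplaceRow t j = laplaceRow t t.castSucc) : t.castSucc < j := by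
  have hval : t.predAbove j = t := by
    rw [laplaceRow_castSucc] at h
    simpa [laplaceRow] using (congrFun h j).symm
  by_contra! hle
  rw [Fin.predAbove_of_le_castSucc _ _ hle] at hval
  exact hj (by rw [← hval, Fin.castSucc_castPred])

theorem multipleRank_laplaceMultiple_lt (hW : IsStrictMonge fun r c => w (e r c))
    {p : Fin (k + 1) → κ} (hp : StrictMono p) (t : Fin k) (v : σ →₀ ℕ) {j : Fin (k + 1)}
    (hj : j ≠ t.castSucc) :
    multipleRank w (antidiagonalExponent e) (laplaceMultiple e hp t v j) <
      multipleRank w (antidiagonalExponent e) (laplaceMultiple e hp t v t.castSucc) := by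
  have hanti : Antitone (laplaceRow t t.castSucc) := by
    rw [laplaceRow_castSucc]
    exact Fin.rev_anti.comp_monotone (Fin.predAbove_right_monotone t)
  rw [multipleRank, multipleRank, Prod.Lex.toLex_lt_toLex, multipleExponent_laplaceMultiple,
    multipleExponent_laplaceMultiple]
  by_cases hrow : laplaceRow t j = laplaceRow t t.castSucc
  · exact Or.inr ⟨by rw [hrow], toLex_comp_succAbove_lt hp (castSucc_lt_of_laplaceRow_eq hj hrow)⟩
  · obtain ⟨π, hπ⟩ := exists_perm_laplaceRow_eq t t.castSucc j
    left
    simp only [map_add, map_sum, ← hπ, Function.comp_apply]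
    exact Nat.add_lt_add_left (hW.sum_comp_perm_lt hp hanti (hπ ▸ hrow)) _

theorem monomialMultiple_laplaceMultiple_mem_span (hW : IsStrictMonge fun r c => w (e r c))
    {p : Fin (k + 1) → κ} (hp : StrictMono p) {t : Fin k} (ht : α t.rev (p t.castSucc) ≠ 0)
    (v : σ →₀ ℕ) :
    monomialMultiple (termMinor α e) (laplaceMultiple e hp t v t.castSucc) ∈
      Submodule.span K (monomialMultiple (termMinor α e) ''
        {Q | multipleRank w (antidiagonalExponent e) Q <
          multipleRank w (antidiagonalExponent e) (laplaceMultiple e hp t v t.castSucc)}) := by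
  have hsum := sum_smul_laplaceMultiple (α := α) (e := e) hp t v
  rw [Fin.sum_univ_succAbove _ t.castSucc] at hsum
  have hcoeff : (-1) ^ (t.castSucc : ℕ) * α t.rev (p t.castSucc) ≠ 0 :=
    mul_ne_zero (pow_ne_zero _ (neg_ne_zero.mpr one_ne_zero)) ht
  rw [← Submodule.smul_mem_iff _ hcoeff, eq_neg_of_add_eq_zero_left hsum]
  refine Submodule.neg_mem _ (Submodule.sum_mem _ fun i _ => Submodule.smul_mem _ _ ?_)
  exact Submodule.subset_span
    (Set.mem_image_of_mem _ (multipleRank_laplaceMultiple_lt hW hp t v (Fin.succAbove_ne _ _)))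

theorem le_of_antidiagonalExponent_le_add
    (hdisj : ∀ s : Fin k → κ, StrictMono s → ∀ t, ∀ c < s t, ∀ j ≥ t,
      Disjoint (e t.rev c).support (e j.rev (s j)).support)
    {s s' : ColumnTuple k κ} {t : Fin k} {u : σ →₀ ℕ}
    (hagree : ∀ j < t, ofLex s'.1 j = ofLex s.1 j) (ht : ofLex s'.1 t < ofLex s.1 t)
    (hle : antidiagonalExponent e s' ≤ u + antidiagonalExponent e s) :
    e t.rev (ofLex s'.1 t) ≤ u := by
  intro x
  by_cases hx : e t.rev (ofLex s'.1 t) x = 0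
  · exact hx.trans_le zero_le
  have hs : antidiagonalExponent e s x = ∑ j ∈ Finset.Iio t, e j.rev (ofLex s.1 j) x := by
    rw [antidiagonalExponent, Finsupp.finsetSum_apply]
    refine (Finset.sum_subset (Finset.subset_univ _) fun j _ hj => ?_).symm
    have hdisj_x := hdisj _ s.2 t _ ht j (by simpa using hj)
    exact Finsupp.notMem_support_iff.mp
      (Finset.disjoint_left.mp hdisj_x (Finsupp.mem_support_iff.mpr hx))
  have hs' : e t.rev (ofLex s'.1 t) x + antidiagonalExponent e s x ≤
      antidiagonalExponent e s' x := by
    rw [hs, antidiagonalExponent, Finsupp.finsetSum_apply]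
    calc _ = ∑ j ∈ Finset.Iic t, e j.rev (ofLex s'.1 j) x := by
          rw [Finset.Iic_eq_cons_Iio, Finset.sum_cons]
          exact congrArg _ (Finset.sum_congr rfl fun j hj => by
            rw [hagree j (Finset.mem_Iio.mp hj)])
      _ ≤ _ := Finset.sum_le_sum_of_subset (Finset.subset_univ _)
  have hle_x := hle x
  rw [Finsupp.add_apply] at hle_x
  omega

theorem exists_eq_laplaceMultiple
    (hdisj : ∀ s : Fin k → κ, StrictMono s → ∀ t, ∀ c < s t, ∀ j ≥ t,
      Disjoint (e t.rev c).support (e j.rev (s j)).support)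
    {P : (σ →₀ ℕ) × ColumnTuple k κ} (hP : ¬ IsReducedMultiple (antidiagonalExponent e) P) :
    ∃ (p : Fin (k + 1) → κ) (hp : StrictMono p) (t : Fin k) (v : σ →₀ ℕ),
      P = laplaceMultiple e hp t v t.castSucc := by
  obtain ⟨u, s⟩ := P
  simp only [IsReducedMultiple, not_forall, not_not] at hP
  obtain ⟨s', ⟨t, hagree, ht⟩, hle⟩ := hP
  refine ⟨_, strictMono_insertNth_castSucc s.2 s'.2 hagree ht, t, u - e t.rev (ofLex s'.1 t), ?_⟩
  refine Prod.ext ?_ (Subtype.ext ?_)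
  · have hdvd : e t.rev (ofLex s'.1 t) ≤ u := le_of_antidiagonalExponent_le_add hdisj hagree ht hle
    simpa [laplaceMultiple] using (tsub_add_cancel_of_le hdvd).symm
  · exact congrArg toLex (funext fun i => by simp)

theorem isRewritingFamily_termMinor (hdeg : ∀ r r' c, (e r c).degree = (e r' c).degree)
    (hW : IsStrictMonge fun r c => w (e r c))
    (hα : ∀ s : Fin k → κ, StrictMono s → ∀ t, α t.rev (s t) ≠ 0)
    (hdisj : ∀ s : Fin k → κ, StrictMono s → ∀ t, ∀ c < s t, ∀ j ≥ t,
      Disjoint (e t.rev c).support (e j.rev (s j)).support) :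
    IsRewritingFamily w (antidiagonalExponent e) (termMinor α e) where
  leading := isLeadingExponent_termMinor hdeg hW hα
  rewrite P hP := by
    obtain ⟨p, hp, t, v, rfl⟩ := exists_eq_laplaceMultiple hdisj hP
    exact monomialMultiple_laplaceMultiple_mem_span hW hp
      (hα (p ∘ Fin.castSucc) (hp.comp Fin.strictMono_castSucc) t) v

end MaximalMinors

section InvGaussMatrix

variable {d : ℕ}

/-- The exponents of `invGaussMatrix d` as a `termMatrix`. The entry `(1, 0)` vanishes, so its
exponent is free; truncated subtraction makes it that of `m₀²`, which keeps the column homogeneous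
and the weights strictly Monge. -/
noncomputable def invGaussExponent (d : ℕ) (r : Fin 3) (c : Fin d) : Fin (d + 1) →₀ ℕ :=
  Finsupp.single ⟨c + r - 1, by omega⟩ (if c.val = 0 then 2 else 1)

/-- The coefficients of `invGaussMatrix d` as a `termMatrix`. -/
noncomputable def invGaussCoeff (d : ℕ) (r : Fin 3) (c : Fin d) : ℂ :=
  if r = 1 then if c.val = 0 then 0 else 2 * c.val - 1 else 1

/-- The weight comparing monomials of equal degree. It is strictly concave in the index of the
variable, which makes the antidiagonal term of every minor the leading one. -/
noncomputable def invGaussWeight (d : ℕ) : (Fin (d + 1) →₀ ℕ) →+ ℕ :=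
  Finsupp.weight fun i => d ^ 2 - i.val ^ 2

theorem invGaussMatrix_eq_termMatrix :
    invGaussMatrix d = termMatrix (invGaussCoeff d) (invGaussExponent d) := by
  ext1 r c
  simp only [invGaussMatrix, termMatrix, Matrix.of_apply]
  by_cases hc : c.val = 0 <;> fin_cases r <;>
    simp [invGaussCoeff, invGaussExponent, hc, X, monomial_pow, C_mul_monomial, -map_sub, -map_mul,
      -C_sub]

theorem invGaussIdeal_eq_span_range_termMinor :
    invGaussIdeal d = Ideal.span
      (Set.range (termMinor (invGaussCoeff d) (invGaussExponent d))) := by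
  rw [invGaussIdeal, invGaussMatrix_eq_termMatrix]
  congr 1
  ext p
  constructor
  · rintro ⟨s, hs, rfl⟩
    exact ⟨⟨toLex s, hs⟩, rfl⟩
  · rintro ⟨s, rfl⟩
    exact ⟨ofLex s.1, s.2, rfl⟩

theorem degree_invGaussExponent (r : Fin 3) (c : Fin d) :
    (invGaussExponent d r c).degree = if c.val = 0 then 2 else 1 := by
  rw [invGaussExponent, Finsupp.degree_single]

theorem invGaussCoeff_antidiagonal_ne_zero {s : Fin 3 → Fin d} (hs : StrictMono s) (t : Fin 3) :
    invGaussCoeff d t.rev (s t) ≠ 0 := by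
  have h01 : (s 0).val < s 1 := hs (by decide)
  have hodd : (2 * (s 1).val : ℂ) - 1 ≠ 0 := by
    rw [sub_ne_zero]
    norm_cast
    omega
  have hne : (s 1).val ≠ 0 := by omega
  fin_cases t <;> simp [invGaussCoeff, hodd, hne]

theorem invGaussWeight_invGaussExponent (r : Fin 3) (c : Fin d) :
    (invGaussWeight d (invGaussExponent d r c) : ℤ) =
      (if c.val = 0 then 2 else 1) * ((d : ℤ) ^ 2 - ((c + r - 1 : ℕ) : ℤ) ^ 2) := by
  have hle : (c + r - 1 : ℕ) ^ 2 ≤ d ^ 2 := Nat.pow_le_pow_left (by omega) 2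
  rw [invGaussWeight, invGaussExponent, Finsupp.weight_single, smul_eq_mul]
  push_cast [Nat.cast_sub hle]
  rfl

theorem isStrictMonge_invGaussWeight :
    IsStrictMonge fun r c => invGaussWeight d (invGaussExponent d r c) := by
  intro r r' hr c c' hc
  zify
  simp only [invGaussWeight_invGaussExponent]
  have hr_cast : (r : ℤ) < r' := by exact_mod_cast hr
  have hpos : ∀ x y : ℕ, ((x.succ + y - 1 : ℕ) : ℤ) = x + y := fun x y => by omega
  obtain ⟨b, hb⟩ := Nat.exists_eq_succ_of_ne_zero (show c'.val ≠ 0 by omega)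
  rw [hb]
  obtain hc0 | hc0 := Nat.eq_zero_or_pos c.val
  · have hfirst : 2 * (r'.val - 1) ^ 2 + r.val ^ 2 < r'.val ^ 2 + 2 * (r.val - 1) ^ 2 := by
      clear hr_cast
      decide +revert
    zify at hfirst
    simp only [hc0, hpos, zero_add, Nat.succ_ne_zero, if_true, if_false]
    nlinarith [mul_nonneg (Nat.cast_nonneg (α := ℤ) b) (sub_pos.mpr hr_cast).le]
  · obtain ⟨a, ha⟩ := Nat.exists_eq_succ_of_ne_zero hc0.ne'
    have hab : (a : ℤ) < b := by omega
    simp only [ha, hpos, Nat.succ_ne_zero, if_false]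
    nlinarith [mul_pos (sub_pos.mpr hr_cast) (sub_pos.mpr hab)]

theorem disjoint_support_invGaussExponent {s : Fin 3 → Fin d} (hs : StrictMono s) {t : Fin 3}
    {c : Fin d} (hc : c < s t) {j : Fin 3} (hj : t ≤ j) :
    Disjoint (invGaussExponent d t.rev c).support (invGaussExponent d j.rev (s j)).support := by
  have h01 : s 0 < s 1 := hs (by decide)
  have h12 : s 1 < s 2 := hs (by decide)
  have hgap : (s t).val + (j - t) ≤ s j := by
    fin_cases t <;> fin_cases j <;> grind
  have hle : t.val ≤ s t := by
    fin_cases t <;> grind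
  have hne : (c + t.rev - 1 : ℕ) ≠ s j + j.rev - 1 := by
    rw [Fin.val_rev, Fin.val_rev]
    omega
  refine Finset.disjoint_of_subset_left Finsupp.support_single_subset
    (Finset.disjoint_of_subset_right Finsupp.support_single_subset ?_)
  simpa using hne

theorem isRewritingFamily_invGauss (d : ℕ) :
    IsRewritingFamily (invGaussWeight d) (antidiagonalExponent (invGaussExponent d))
      (termMinor (invGaussCoeff d) (invGaussExponent d)) :=
  isRewritingFamily_termMinor
    (fun _ _ _ => by rw [degree_invGaussExponent, degree_invGaussExponent])
    isStrictMonge_invGaussWeight (fun _ => invGaussCoeff_antidiagonal_ne_zero)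
    fun _ hs _ _ hc _ => disjoint_support_invGaussExponent hs hc

end InvGaussMatrix

section PartialDegree

variable {σ : Type*}

/-- The degree of a monomial in the variables of `s` only. -/
noncomputable def degreeOn (s : Finset σ) : (σ →₀ ℕ) →+ ℕ :=
  ∑ i ∈ s, Finsupp.applyAddHom i

theorem degreeOn_apply (s : Finset σ) (u : σ →₀ ℕ) : degreeOn s u = ∑ i ∈ s, u i := by
  simp [degreeOn]

theorem degreeOn_single [DecidableEq σ] (s : Finset σ) (i : σ) (n : ℕ) :
    degreeOn s (Finsupp.single i n) = if i ∈ s then n else 0 := by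
  simp [degreeOn_apply, Finsupp.single_apply]

theorem degreeOn_insert [DecidableEq σ] {s : Finset σ} {i : σ} (hi : i ∉ s) (u : σ →₀ ℕ) :
    degreeOn (insert i s) u = u i + degreeOn s u := by
  simp only [degreeOn_apply, Finset.sum_insert hi]

theorem degreeOn_le_degree (s : Finset σ) (u : σ →₀ ℕ) : degreeOn s u ≤ u.degree := by
  classical
  rw [degreeOn_apply, Finsupp.degree_apply]
  refine Finset.sum_le_sum_of_ne_zero fun i _ hi => Finsupp.mem_support_iff.mpr hi

theorem exists_monotone_sum_single_le [LinearOrder σ] {s : Finset σ} {k : ℕ} {u : σ →₀ ℕ}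
    (h : k ≤ degreeOn s u) :
    ∃ f : Fin k → σ, Monotone f ∧ (∀ j, f j ∈ s) ∧ ∑ j, Finsupp.single (f j) 1 ≤ u := by
  induction k generalizing s u with
  | zero => exact ⟨Fin.elim0, fun i => i.elim0, fun i => i.elim0, by simp⟩
  | succ k ih =>
    have hne : ∃ i ∈ s, u i ≠ 0 := by
      rw [degreeOn_apply] at h
      exact Finset.exists_ne_zero_of_sum_ne_zero (by omega)
    obtain ⟨i, hi, hmin⟩ := Finset.exists_min_image {i ∈ s | u i ≠ 0} id
      (by simpa [Finset.Nonempty] using hne)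
    obtain ⟨his, hiu⟩ := Finset.mem_filter.mp hi
    have hle : Finsupp.single i 1 ≤ u :=
      Finsupp.single_le_iff.mpr (Nat.one_le_iff_ne_zero.mpr hiu)
    obtain ⟨v, rfl⟩ := exists_add_of_le hle
    rw [map_add, degreeOn_single, if_pos his, add_comm, add_le_add_iff_left] at h
    obtain ⟨f, hf, hfs, hfv⟩ := ih h
    have hif : ∀ j, i ≤ f j := fun j => by
      refine hmin _ (Finset.mem_filter.mpr ⟨hfs j, ?_⟩)
      have hj := (Finset.single_le_sum (fun _ _ => zero_le) (Finset.mem_univ j)).trans hfv (f j)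
      simp only [Finsupp.single_eq_same, Finsupp.add_apply] at hj ⊢
      omega
    refine ⟨Fin.cons i f, fun a b hab => ?_, Fin.cases his hfs, ?_⟩
    · cases a using Fin.cases <;> cases b using Fin.cases
      · exact le_rfl
      · exact hif _
      · exact absurd hab (Fin.succ_pos _).not_ge
      · exact hf (Fin.succ_le_succ_iff.mp hab)
    · simpa [Fin.sum_univ_succ] using hfv

theorem degreeOn_filter_mem [DecidableEq σ] (s : Finset σ) (u : σ →₀ ℕ) :
    degreeOn s (u.filter (· ∈ s)) = degreeOn s u := by
  simp only [degreeOn_apply]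
  exact Finset.sum_congr rfl fun i hi => u.filter_apply_pos _ hi

theorem filter_mem_add_eq_left [DecidableEq σ] {s : Finset σ} {f g : σ →₀ ℕ}
    (hf : f.support ⊆ s) (hg : Disjoint s g.support) : (f + g).filter (· ∈ s) = f := by
  rw [Finsupp.filter_add, (Finsupp.filter_eq_self_iff _ _).mpr,
    (Finsupp.filter_eq_zero_iff _ _).mpr, add_zero]
  · exact fun i hi => Finsupp.notMem_support_iff.mp (Finset.disjoint_left.mp hg hi)
  · exact fun i hi => hf (Finsupp.mem_support_iff.mpr hi)

theorem ncard_degree_eq_and_degreeOn_eq [Fintype σ] [DecidableEq σ] (s : Finset σ) (k l : ℕ) :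
    {u : σ →₀ ℕ | u.degree = k + l ∧ degreeOn s u = k}.ncard =
      s.card.multichoose k * sᶜ.card.multichoose l := by
  rw [← Finset.card_finsuppAntidiag_nat_eq_multichoose,
    ← Finset.card_finsuppAntidiag_nat_eq_multichoose, ← Finset.card_product,
    ← Set.ncard_coe_finset]
  have hsum : ∀ u : σ →₀ ℕ, degreeOn s u + degreeOn sᶜ u = u.degree := fun u => by
    rw [degreeOn_apply, degreeOn_apply, Finset.sum_add_sum_compl, Finsupp.degree_eq_sum]
  have hmem : ∀ (t : Finset σ) (n : ℕ) (f : σ →₀ ℕ),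
      f ∈ t.finsuppAntidiag n ↔ degreeOn t f = n ∧ f.support ⊆ t := fun t n f => by
    rw [Finset.mem_finsuppAntidiag, degreeOn_apply]
  refine Set.ncard_congr (fun u _ => (u.filter (· ∈ s), u.filter (· ∈ sᶜ))) ?_ ?_ ?_
  · rintro u ⟨hdeg, hk⟩
    rw [Finset.mem_coe, Finset.mem_product, hmem, hmem, degreeOn_filter_mem, degreeOn_filter_mem]
    refine ⟨⟨hk, fun i hi => (Finset.mem_filter.mp hi).2⟩,
      ⟨?_, fun i hi => (Finset.mem_filter.mp hi).2⟩⟩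
    have hsum_u := hsum u
    omega
  · intro u v _ _ h
    simp only [Finset.mem_compl, Prod.mk.injEq] at h
    rw [← u.filter_add_filter_not (· ∈ s), h.1, h.2, v.filter_add_filter_not]
  · rintro ⟨f, g⟩ hfg
    rw [Finset.mem_coe, Finset.mem_product, hmem, hmem] at hfg
    obtain ⟨⟨rfl, hf⟩, rfl, hg⟩ := hfg
    have hfilter : (f + g).filter (· ∈ s) = f :=
      filter_mem_add_eq_left hf (disjoint_compl_right.mono_right hg)
    have hfilter_compl : (f + g).filter (· ∈ sᶜ) = g := by
      rw [add_comm]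
      exact filter_mem_add_eq_left hg (disjoint_compl_left.mono_right hf)
    refine ⟨f + g, ⟨?_, ?_⟩, Prod.ext hfilter hfilter_compl⟩
    · rw [← hsum, ← degreeOn_filter_mem s, ← degreeOn_filter_mem sᶜ, hfilter, hfilter_compl]
    · rw [← degreeOn_filter_mem, hfilter]

theorem ncard_degree_eq_and_degreeOn_eq_and_apply_ne_zero {s : Finset σ} {i : σ} (hi : i ∈ s)
    (n k : ℕ) :
    {u : σ →₀ ℕ | (u.degree = n + 1 ∧ degreeOn s u = k + 1) ∧ u i ≠ 0}.ncard =
      {u : σ →₀ ℕ | u.degree = n ∧ degreeOn s u = k}.ncard := by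
  classical
  refine Eq.trans (congrArg Set.ncard (Set.ext fun u => ?_))
    (Set.ncard_image_of_injective _ (add_left_injective (Finsupp.single i 1)))
  constructor
  · rintro ⟨⟨hdeg, hk⟩, hu⟩
    obtain ⟨v, rfl⟩ := exists_add_of_le
      (Finsupp.single_le_iff.mpr (Nat.one_le_iff_ne_zero.mpr hu))
    refine ⟨v, ⟨?_, ?_⟩, add_comm _ _⟩
    · simpa [add_comm 1] using hdeg
    · simpa [add_comm 1, degreeOn_single, hi] using hk
  · rintro ⟨v, ⟨rfl, rfl⟩, rfl⟩
    simp [degreeOn_single, hi]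

end PartialDegree

section StandardMonomials

variable {d : ℕ}

/-- The variables `m_1, …, m_{d-2}`: those of the monomials generating the initial ideal of
`invGaussIdeal d`. -/
def interiorVariables (d : ℕ) : Finset (Fin (d + 1)) :=
  Finset.Ioo 0 ⟨d - 1, by omega⟩

theorem mem_interiorVariables {i : Fin (d + 1)} :
    i ∈ interiorVariables d ↔ 0 < i.val ∧ i.val < d - 1 := by
  rw [interiorVariables, Finset.mem_Ioo, Fin.lt_def, Fin.lt_def, Fin.val_zero]

theorem one_mem_interiorVariables (hd : 3 ≤ d) : ⟨1, by omega⟩ ∈ interiorVariables d :=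
  mem_interiorVariables.mpr ⟨one_pos, Nat.lt_sub_of_add_lt hd⟩

theorem card_interiorVariables : (interiorVariables d).card = d - 2 := by
  rw [interiorVariables, Fin.card_Ioo, Fin.val_zero, Nat.sub_zero, Nat.sub_sub]

theorem card_compl_interiorVariables (hd : 2 ≤ d) : (interiorVariables d)ᶜ.card = 3 := by
  rw [Finset.card_compl, card_interiorVariables, Fintype.card_fin]
  omega

theorem antidiagonalExponent_invGaussExponent (s : ColumnTuple 3 (Fin d)) :
    antidiagonalExponent (invGaussExponent d) s =
      Finsupp.single ⟨ofLex s.1 0 + 1, by omega⟩ (if (ofLex s.1 0).val = 0 then 2 else 1) +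
        Finsupp.single (ofLex s.1 1).castSucc 1 +
        Finsupp.single ⟨ofLex s.1 2 - 1, by omega⟩ 1 := by
  have h01 : (ofLex s.1 0).val < ofLex s.1 1 := s.2 (by decide)
  have h12 : (ofLex s.1 1).val < ofLex s.1 2 := s.2 (by decide)
  rw [antidiagonalExponent, Fin.sum_univ_three, invGaussExponent, invGaussExponent,
    invGaussExponent, if_neg (Nat.ne_zero_of_lt h01), if_neg (Nat.ne_zero_of_lt h12)]
  rfl

theorem mem_range_antidiagonalExponent_invGaussExponent {u : Fin (d + 1) →₀ ℕ} :
    u ∈ Set.range (antidiagonalExponent (invGaussExponent d)) ↔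
      ∃ a b c, 0 < a.val ∧ a ≤ b ∧ b ≤ c ∧ c.val < d - 1 ∧
        u = Finsupp.single a (if a.val = 1 then 2 else 1) + Finsupp.single b 1 +
          Finsupp.single c 1 := by
  constructor
  · rintro ⟨s, rfl⟩
    have h01 : (ofLex s.1 0).val < ofLex s.1 1 := s.2 (by decide)
    have h12 : (ofLex s.1 1).val < ofLex s.1 2 := s.2 (by decide)
    have h2 : (ofLex s.1 2).val < d := (ofLex s.1 2).2
    refine ⟨⟨ofLex s.1 0 + 1, by omega⟩, (ofLex s.1 1).castSucc, ⟨ofLex s.1 2 - 1, by omega⟩,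
      Nat.succ_pos _, h01, Nat.le_sub_one_of_lt h12,
      Nat.sub_lt_sub_right (Nat.one_le_of_lt h12) h2, ?_⟩
    rw [antidiagonalExponent_invGaussExponent]
    simp only [Nat.add_eq_right]
  · rintro ⟨a, b, c, ha, hab, hbc, hc, rfl⟩
    rw [Fin.le_def] at hab hbc
    refine ⟨⟨toLex ![⟨a - 1, by omega⟩, ⟨b, by omega⟩, ⟨c + 1, by omega⟩], ?_⟩, ?_⟩
    · rw [ofLex_toLex, Fin.strictMono_iff_lt_succ, Fin.forall_fin_two]
      exact ⟨show a.val - 1 < b by omega, show b.val < c + 1 by omega⟩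
    · have ha1 : a.val - 1 = 0 ↔ a.val = 1 := by omega
      simp [antidiagonalExponent_invGaussExponent, Nat.sub_add_cancel ha, ha1]

theorem degreeOn_interiorVariables_eq_add (hd : 3 ≤ d) (u : Fin (d + 1) →₀ ℕ) :
    degreeOn (interiorVariables d) u =
      u ⟨1, by omega⟩ + degreeOn (Finset.Ioo ⟨1, by omega⟩ ⟨d - 1, by omega⟩) u := by
  have hinsert : interiorVariables d =
      insert ⟨1, by omega⟩ (Finset.Ioo ⟨1, by omega⟩ ⟨d - 1, by omega⟩) := by
    ext i
    rw [mem_interiorVariables, Finset.mem_insert, Finset.mem_Ioo, Fin.ext_iff, Fin.lt_def,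
      Fin.lt_def]
    dsimp only
    omega
  rw [hinsert, degreeOn_insert Finset.left_notMem_Ioo]

theorem exists_antidiagonalExponent_le (hd : 3 ≤ d) {u : Fin (d + 1) →₀ ℕ}
    (hu : 4 ≤ degreeOn (interiorVariables d) u ∨
      degreeOn (interiorVariables d) u = 3 ∧ u ⟨1, by omega⟩ = 0) :
    ∃ s, antidiagonalExponent (invGaussExponent d) s ≤ u := by
  suffices h : ∃ v ∈ Set.range (antidiagonalExponent (invGaussExponent d)), v ≤ u by
    obtain ⟨_, ⟨s, rfl⟩, hs⟩ := h
    exact ⟨s, hs⟩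
  simp only [mem_range_antidiagonalExponent_invGaussExponent]
  obtain hu1 | hu1 := le_or_gt 2 (u ⟨1, by omega⟩)
  · obtain ⟨v, rfl⟩ := exists_add_of_le (Finsupp.single_le_iff.mpr hu1)
    have hv : 2 ≤ degreeOn (interiorVariables d) v := by
      rw [map_add, degreeOn_single, if_pos (one_mem_interiorVariables hd)] at hu
      omega
    obtain ⟨f, hf, hfs, hfv⟩ := exists_monotone_sum_single_le hv
    simp only [mem_interiorVariables] at hfs
    refine ⟨_, ⟨⟨1, by omega⟩, f 0, f 1, one_pos, (hfs 0).1, hf zero_le_one, (hfs 1).2, rfl⟩, ?_⟩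
    rw [if_pos rfl, add_assoc]
    exact add_le_add_right (by simpa using hfv) _
  · have hv : 3 ≤ degreeOn (Finset.Ioo ⟨1, by omega⟩ ⟨d - 1, by omega⟩) u := by
      rw [degreeOn_interiorVariables_eq_add hd] at hu
      omega
    obtain ⟨f, hf, hfs, hfv⟩ := exists_monotone_sum_single_le hv
    simp only [Finset.mem_Ioo, Fin.lt_def] at hfs
    refine ⟨_, ⟨f 0, f 1, f 2, zero_lt_one.trans (hfs 0).1, hf (by decide), hf (by decide),
      (hfs 2).2, rfl⟩, ?_⟩
    rw [if_neg (hfs 0).1.ne']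
    simpa [Fin.sum_univ_three] using hfv

theorem degreeOn_interiorVariables_antidiagonalExponent (hd : 3 ≤ d) (s : ColumnTuple 3 (Fin d)) :
    4 ≤ degreeOn (interiorVariables d) (antidiagonalExponent (invGaussExponent d) s) ∨
      degreeOn (interiorVariables d) (antidiagonalExponent (invGaussExponent d) s) = 3 ∧
        antidiagonalExponent (invGaussExponent d) s ⟨1, by omega⟩ = 0 := by
  obtain ⟨a, b, c, ha, hab, hbc, hc, hs⟩ :=
    mem_range_antidiagonalExponent_invGaussExponent.mp (Set.mem_range_self s)
  rw [Fin.le_def] at hab hbc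
  have hdeg : degreeOn (interiorVariables d) (antidiagonalExponent (invGaussExponent d) s) =
      (if a.val = 1 then 2 else 1) + 1 + 1 := by
    rw [hs, map_add, map_add, degreeOn_single, degreeOn_single, degreeOn_single,
      if_pos (mem_interiorVariables.mpr ⟨ha, by omega⟩),
      if_pos (mem_interiorVariables.mpr ⟨by omega, by omega⟩),
      if_pos (mem_interiorVariables.mpr ⟨by omega, hc⟩)]
  by_cases ha1 : a.val = 1
  · left
    rw [hdeg, if_pos ha1]
  · right
    rw [hdeg, if_neg ha1, hs]
    have hb1 : b.val ≠ 1 := by omega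
    have hc1 : c.val ≠ 1 := by omega
    simp [Fin.ext_iff, ha1, hb1, hc1]

theorem isStandard_antidiagonalExponent_invGaussExponent (hd : 3 ≤ d) {u : Fin (d + 1) →₀ ℕ} :
    IsStandard (antidiagonalExponent (invGaussExponent d)) u ↔
      degreeOn (interiorVariables d) u ≤ 2 ∨
        degreeOn (interiorVariables d) u = 3 ∧ u ⟨1, by omega⟩ ≠ 0 := by
  constructor
  · intro hu
    by_contra! hdeg
    obtain ⟨s, hs⟩ := exists_antidiagonalExponent_le hd (u := u) (by omega)
    exact hu s hs
  · intro hu s hs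
    obtain ⟨v, rfl⟩ := exists_add_of_le hs
    rw [map_add, Finsupp.add_apply] at hu
    have hdeg := degreeOn_interiorVariables_antidiagonalExponent hd s
    have hv := degreeOn_interiorVariables_eq_add hd v
    omega

theorem ncard_degree_eq_and_degreeOn_interiorVariables_eq (hd : 2 ≤ d) (n k : ℕ) :
    {u : Fin (d + 1) →₀ ℕ | u.degree = n ∧ degreeOn (interiorVariables d) u = k}.ncard =
      (d - 2).multichoose k * (n + 2 - k).choose 2 := by
  obtain hnk | hkn := lt_or_ge n k
  · rw [Nat.choose_eq_zero_of_lt (by omega), mul_zero]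
    convert Set.ncard_empty (Fin (d + 1) →₀ ℕ)
    refine Set.eq_empty_of_forall_notMem ?_
    rintro u ⟨rfl, rfl⟩
    exact hnk.not_ge (degreeOn_le_degree _ _)
  · obtain ⟨l, rfl⟩ := exists_add_of_le hkn
    rw [ncard_degree_eq_and_degreeOn_eq, card_interiorVariables, card_compl_interiorVariables hd,
      Nat.multichoose_eq 3, show k + l + 2 - k = l + 2 by omega, show 3 + l - 1 = l + 2 by omega,
      Nat.choose_symm_add]

theorem ncard_degree_eq_and_degreeOn_interiorVariables_eq_three (hd : 3 ≤ d) (n : ℕ) :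
    {u : Fin (d + 1) →₀ ℕ | (u.degree = n ∧ degreeOn (interiorVariables d) u = 3) ∧
      u ⟨1, by omega⟩ ≠ 0}.ncard = (d - 2).multichoose 2 * (n - 1).choose 2 := by
  obtain _ | n := n
  · rw [Nat.choose_zero_succ, mul_zero]
    convert Set.ncard_empty (Fin (d + 1) →₀ ℕ)
    refine Set.eq_empty_of_forall_notMem ?_
    rintro u ⟨⟨hdeg, hu⟩, -⟩
    have hle := degreeOn_le_degree (interiorVariables d) u
    omega
  · exact (ncard_degree_eq_and_degreeOn_eq_and_apply_ne_zero
      (one_mem_interiorVariables hd) n 2).trans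
      (ncard_degree_eq_and_degreeOn_interiorVariables_eq (by omega) n 2)

theorem ncard_degree_eq_and_isStandard (hd : 3 ≤ d) (n : ℕ) :
    {u : Fin (d + 1) →₀ ℕ |
      u.degree = n ∧ IsStandard (antidiagonalExponent (invGaussExponent d)) u}.ncard =
      Nat.choose (n + 2) 2 + (d - 2) * Nat.choose (n + 1) 2
        + Nat.choose (d - 1) 2 * Nat.choose n 2
        + Nat.choose (d - 1) 2 * Nat.choose (n - 1) 2 := by
  set A : ℕ → Set (Fin (d + 1) →₀ ℕ) := fun k =>
    {u | u.degree = n ∧ degreeOn (interiorVariables d) u = k}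
  set B : Set (Fin (d + 1) →₀ ℕ) := {u ∈ A 3 | u ⟨1, by omega⟩ ≠ 0}
  have hunion : {u : Fin (d + 1) →₀ ℕ |
      u.degree = n ∧ IsStandard (antidiagonalExponent (invGaussExponent d)) u} =
      A 0 ∪ A 1 ∪ A 2 ∪ B := by
    ext u
    simp only [isStandard_antidiagonalExponent_invGaussExponent hd, A, B, Set.mem_union,
      Set.mem_ofPred_eq]
    omega
  have hA : ∀ k, (A k).ncard = (d - 2).multichoose k * (n + 2 - k).choose 2 :=
    ncard_degree_eq_and_degreeOn_interiorVariables_eq (by omega) n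
  have hB : B.ncard = (d - 2).multichoose 2 * (n - 1).choose 2 :=
    ncard_degree_eq_and_degreeOn_interiorVariables_eq_three hd n
  have hBA : B ⊆ A 3 := Set.sep_subset _ _
  have hA_disjoint : ∀ {j k}, j ≠ k → Disjoint (A j) (A k) := fun hjk =>
    Set.disjoint_left.mpr fun u hj hk => hjk (hj.2.symm.trans hk.2)
  have hA_finite : ∀ k, Finite (A k) := fun k =>
    (Finsupp.finite_of_degree_eq n).subset fun u hu => hu.1
  have hB_finite : Finite B := (A 3).toFinite.subset hBA
  have hd1 : d - 2 + 2 - 1 = d - 1 := by omega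
  rw [hunion, Set.ncard_union_eq, Set.ncard_union_eq, Set.ncard_union_eq, hA, hA, hA, hB,
    Nat.multichoose_zero_right, Nat.multichoose_one_right, Nat.multichoose_eq _ 2, hd1, one_mul]
  · rfl
  · exact hA_disjoint (by decide)
  · exact (hA_disjoint (by decide)).union_left (hA_disjoint (by decide))
  · exact (((hA_disjoint (by decide)).union_left (hA_disjoint (by decide))).union_left
      (hA_disjoint (by decide))).mono_right hBA

end StandardMonomials

/-- The Hilbert function of `S/I₃(H)`: the `n`-th graded piece `Sₙ/Iₙ` has dimension
`C(n+2,2) + (d-2)·C(n+1,2) + C(d-1,2)·C(n,2) + C(d-1,2)·C(n-1,2)`. -/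
theorem invGauss_hilbertFunction (d : ℕ) (hd : 3 ≤ d) (n : ℕ) :
    Module.finrank ℂ
      (↥(homogeneousSubmodule (Fin (d + 1)) ℂ n) ⧸
        (Submodule.comap (homogeneousSubmodule (Fin (d + 1)) ℂ n).subtype
          (Submodule.restrictScalars ℂ (invGaussIdeal d)))) =
      Nat.choose (n + 2) 2 + (d - 2) * Nat.choose (n + 1) 2
        + Nat.choose (d - 1) 2 * Nat.choose n 2
        + Nat.choose (d - 1) 2 * Nat.choose (n - 1) 2 := by
  rw [invGaussIdeal_eq_span_range_termMinor,
    (isRewritingFamily_invGauss d).finrank_homogeneousSubmodule_quotient,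
    ncard_degree_eq_and_isStandard hd]
end
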